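/- arXiv:2403.00693 — 8 statements merged into one kernel-verified Lean document; each statement's English description precedes it below -/
import Mathlib

section
/- There exists a real number a ∈ (0, 1/7) such that the iterated function system 𝒮₁(a) = {x/7, x/7 + a, x/7 + 6/7} on ℝ satisfies the weak separation property but does not satisfy the convex finite type condition; that is, the collection of neighbourhood types {N_{(0,1)}(σ) : σ a finite word over {1,2,3}} is infinite. -/
open Set

/-- The IFS 𝒮₁(a) = {x/7, x/7 + a, x/7 + 6/7} on ℝ. -/
noncomputable def S1 (a : ℝ) : Fin 3 → ℝ → ℝ :=
  ![fun x => x / 7, fun x => x / 7 + a, fun x => x / 7 + 6 / 7]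

/-- For a word σ = (s₁,…,s_k), the composition S_σ = S_{s₁} ∘ ⋯ ∘ S_{s_k}. -/
noncomputable def Sw1 (a : ℝ) : List (Fin 3) → ℝ → ℝ
  | [] => id
  | i :: σ => S1 a i ∘ Sw1 a σ

/-- For words σ, τ of the same length k, S_σ⁻¹ ∘ S_τ is the translation by
`amt1 a σ τ = 7 ^ k * (S_τ(0) − S_σ(0))`. -/
noncomputable def amt1 (a : ℝ) (σ τ : List (Fin 3)) : ℝ :=
  7 ^ σ.length * (Sw1 a τ 0 - Sw1 a σ 0)

/-- The weak separation property for 𝒮₁(a): the nonzero translation amounts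
`a_{σ,τ}` over pairs of words of equal length are bounded away from 0. -/
def WSP1 (a : ℝ) : Prop :=
  ∃ ε > 0, ∀ σ τ : List (Fin 3), σ.length = τ.length →
    amt1 a σ τ ≠ 0 → ε ≤ |amt1 a σ τ|

/-- The neighbourhood type of a word σ relative to the open interval (0,1). -/
noncomputable def Ntype1 (a : ℝ) (σ : List (Fin 3)) : Set ℝ :=
  { t | ∃ τ : List (Fin 3), τ.length = σ.length ∧
      (Sw1 a σ '' Ioo 0 1 ∩ Sw1 a τ '' Ioo 0 1).Nonempty ∧ t = amt1 a σ τ }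

/-- The convex finite type condition: only finitely many neighbourhood types
relative to (0,1). -/
def FTCco1 (a : ℝ) : Prop := (Set.range (Ntype1 a)).Finite


/-- indicator of powers of two `2 ^ j`, `j ≥ 2` -/
noncomputable def bdig (i : ℕ) : ℝ := by
  classical exact if ∃ j, 2 ≤ j ∧ i = 2 ^ j then 1 else 0

lemma bdig_cases (i : ℕ) : bdig i = 0 ∨ bdig i = 1 := by
  unfold bdig; split_ifs <;> simp

/-- tails of the base 7 expansion -/
noncomputable def Btail (n : ℕ) : ℝ := ∑' i : ℕ, bdig (n + i + 1) * (1 / 7 : ℝ) ^ (i + 1)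

lemma geo_summable : Summable (fun i : ℕ => (1 / 7 : ℝ) ^ (i + 1)) := by
  have := (summable_geometric_of_lt_one (r := (1/7 : ℝ)) (by norm_num) (by norm_num))
  exact (summable_nat_add_iff 1).2 this

lemma geo_tsum : ∑' i : ℕ, (1 / 7 : ℝ) ^ (i + 1) = 1 / 6 := by
  simp_rw [pow_succ]
  rw [tsum_mul_right, tsum_geometric_of_lt_one (by norm_num) (by norm_num)]
  norm_num

lemma term_nonneg (n i : ℕ) : 0 ≤ bdig (n + i + 1) * (1 / 7 : ℝ) ^ (i + 1) := by
  rcases bdig_cases (n + i + 1) with h | h <;> rw [h] <;> positivity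

lemma term_le (n i : ℕ) : bdig (n + i + 1) * (1 / 7 : ℝ) ^ (i + 1) ≤ (1 / 7 : ℝ) ^ (i + 1) := by
  have : (0 : ℝ) ≤ (1 / 7 : ℝ) ^ (i + 1) := by positivity
  rcases bdig_cases (n + i + 1) with h | h <;> rw [h] <;> linarith

lemma term_summable (n : ℕ) :
    Summable (fun i : ℕ => bdig (n + i + 1) * (1 / 7 : ℝ) ^ (i + 1)) :=
  Summable.of_nonneg_of_le (term_nonneg n) (term_le n) geo_summable

lemma Btail_le (n : ℕ) : Btail n ≤ 1 / 6 := by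
  rw [← geo_tsum]
  exact (term_summable n).tsum_le_tsum (term_le n) geo_summable

lemma Btail_pos (n : ℕ) : 0 < Btail n := by
  have h1 : n + 2 < 2 ^ (n + 2) := Nat.lt_two_pow_self
  refine (term_summable n).tsum_pos (term_nonneg n) (2 ^ (n + 2) - n - 1) ?_
  have h2 : n + (2 ^ (n + 2) - n - 1) + 1 = 2 ^ (n + 2) := by omega
  rw [h2]
  have : bdig (2 ^ (n + 2)) = 1 := by
    unfold bdig
    exact if_pos ⟨n + 2, by omega, rfl⟩
  rw [this]; positivity

lemma Btail_succ (n : ℕ) : 7 * Btail n = bdig (n + 1) + Btail (n + 1) := by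
  have h := (term_summable n).tsum_eq_zero_add
  have h2 : ∑' i : ℕ, bdig (n + (i + 1) + 1) * (1 / 7 : ℝ) ^ (i + 1 + 1)
      = Btail (n + 1) * (1 / 7) := by
    unfold Btail
    rw [← tsum_mul_right]
    congr 1; ext i
    rw [pow_succ _ (i + 1), show n + (i + 1) + 1 = n + 1 + i + 1 by ring]; ring
  rw [h2] at h
  change Btail n = _ at h
  rw [h]; simp; ring

lemma Btail_zero_le : Btail 0 ≤ 1 / 294 := by
  have b1 : bdig 1 = 0 := by
    unfold bdig
    refine if_neg ?_
    rintro ⟨j, hj, h⟩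
    have : 2 ^ 2 ≤ 2 ^ j := Nat.pow_le_pow_right (by norm_num) hj
    omega
  have b2 : bdig 2 = 0 := by
    unfold bdig
    refine if_neg ?_
    rintro ⟨j, hj, h⟩
    have : 2 ^ 2 ≤ 2 ^ j := Nat.pow_le_pow_right (by norm_num) hj
    omega
  have h0 := Btail_succ 0
  have h1 := Btail_succ 1
  have := Btail_le 2
  norm_num [b1, b2] at h0 h1
  linarith

lemma Btail_gap (k n : ℕ) (h : ∀ i, i < k → bdig (n + i + 1) = 0) :
    7 ^ k * Btail n = Btail (n + k) := by
  induction k with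
  | zero => simp
  | succ k ih =>
    have := ih (fun i hi => h i (by omega))
    have h2 := Btail_succ (n + k)
    rw [h k (by omega), ← this] at h2
    rw [pow_succ, ← add_assoc]; linarith

lemma Btail_small (δ : ℝ) (hδ : 0 < δ) : ∃ n, Btail n < δ := by
  obtain ⟨k, hk⟩ := exists_pow_lt_of_lt_one hδ (show (1 / 7 : ℝ) < 1 by norm_num)
  refine ⟨2 ^ (k + 1), ?_⟩
  have hg := Btail_gap k (2 ^ (k + 1)) (by
    intro i hi
    unfold bdig
    refine if_neg ?_
    rintro ⟨j, hj, h⟩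
    have hk2 : k + 1 < 2 ^ (k + 1) := Nat.lt_two_pow_self
    have h1 : 2 ^ (k + 1) < 2 ^ j := by omega
    have h2 : 2 ^ j < 2 ^ (k + 2) := by rw [← h, pow_succ 2 (k + 1)]; omega
    have h3 := (Nat.pow_lt_pow_iff_right (by norm_num : 1 < 2)).1 h1
    have h4 := (Nat.pow_lt_pow_iff_right (by norm_num : 1 < 2)).1 h2
    omega)
  have hle := Btail_le (2 ^ (k + 1) + k)
  rw [← hg] at hle
  have h7 : (0 : ℝ) < 7 ^ k := by positivity
  rw [one_div, inv_pow] at hk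
  have : Btail (2 ^ (k + 1)) ≤ (7 ^ k)⁻¹ := by
    rw [le_inv_comm₀ (Btail_pos _) h7, ← one_div, le_div_iff₀ (Btail_pos _)]
    linarith
  linarith

lemma Btail_infinite : (range Btail).Infinite := by
  intro hf
  obtain ⟨m, ⟨n, rfl⟩, hm⟩ := hf.exists_minimal (range_nonempty _)
  obtain ⟨k, hk⟩ := Btail_small (Btail n) (Btail_pos n)
  exact absurd (hm ⟨k, rfl⟩ hk.le) (not_le.2 hk)

/-- the orbit -/
noncomputable def Torb (n : ℕ) : ℝ := 1 - 5 / (1 - Btail 0) * Btail n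

lemma coef_bounds : 5 ≤ 5 / (1 - Btail 0) ∧ 5 / (1 - Btail 0) ≤ 5.1 := by
  have h := Btail_zero_le
  have h' := Btail_pos 0
  constructor
  · rw [le_div_iff₀ (by linarith)]; linarith
  · rw [div_le_iff₀ (by linarith)]; linarith

lemma Torb_infinite : (range Torb).Infinite := by
  have : range Torb = (fun x => 1 - 5 / (1 - Btail 0) * x) '' range Btail := by
    rw [← range_comp]; rfl
  rw [this]
  refine Btail_infinite.image (Function.Injective.injOn ?_)
  intro x y h
  have := coef_bounds.1
  simp only at h
  have h2 : 5 / (1 - Btail 0) * x = 5 / (1 - Btail 0) * y := by linarith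
  exact mul_left_cancel₀ (by linarith) h2

lemma Torb_lt (n : ℕ) : Torb n < 1 := by
  unfold Torb
  have := mul_pos (by linarith [coef_bounds.1] : 0 < 5 / (1 - Btail 0)) (Btail_pos n)
  linarith

lemma Torb_ge (n : ℕ) : 0.15 ≤ Torb n := by
  unfold Torb
  have := mul_le_mul coef_bounds.2 (Btail_le n) (Btail_pos n).le (by norm_num)
  linarith

lemma Torb_zero_ge : 0.9 ≤ Torb 0 := by
  unfold Torb
  have := mul_le_mul coef_bounds.2 Btail_zero_le (Btail_pos 0).le (by norm_num)
  linarith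

lemma Torb_succ (n : ℕ) : Torb (n + 1) = 7 * Torb n - 6 ∨ Torb (n + 1) = 7 * Torb n - Torb 0 := by
  have hs := Btail_succ n
  have h := Btail_zero_le
  have hne : 1 - Btail 0 ≠ 0 := by linarith
  rcases bdig_cases (n + 1) with hb | hb <;> rw [hb] at hs
  · left
    unfold Torb
    rw [show Btail (n + 1) = 7 * Btail n by linarith]; ring
  · right
    unfold Torb
    rw [show Btail (n + 1) = 7 * Btail n - 1 by linarith]
    field_simp; ring

/-- digit -/
noncomputable def dig (A : ℝ) : Fin 3 → ℝ := ![0, A, 6]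

lemma S1_eq (A : ℝ) (i : Fin 3) (x : ℝ) : S1 (A / 7) i x = x / 7 + dig A i / 7 := by
  fin_cases i <;> simp [S1, dig]

lemma Sw1_eq (A : ℝ) (σ : List (Fin 3)) (x : ℝ) :
    Sw1 (A / 7) σ x = x / 7 ^ σ.length + Sw1 (A / 7) σ 0 := by
  induction σ generalizing x with
  | nil => simp [Sw1]
  | cons i σ ih =>
    simp only [Sw1, Function.comp, S1_eq, List.length_cons]
    rw [ih x]; field_simp; ring

lemma Sw1_append (A : ℝ) (σ τ : List (Fin 3)) (x : ℝ) :
    Sw1 (A / 7) (σ ++ τ) x = Sw1 (A / 7) σ (Sw1 (A / 7) τ x) := by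
  induction σ with
  | nil => simp [Sw1]
  | cons i σ ih => simp [Sw1, ih]

lemma amt_snoc (A : ℝ) (σ τ : List (Fin 3)) (h : σ.length = τ.length) (i j : Fin 3) :
    amt1 (A / 7) (σ ++ [i]) (τ ++ [j]) = 7 * amt1 (A / 7) σ τ + (dig A j - dig A i) := by
  unfold amt1
  rw [Sw1_append, Sw1_append, Sw1_eq A τ (Sw1 _ [j] 0), Sw1_eq A σ (Sw1 _ [i] 0)]
  simp only [Sw1, Function.comp, S1_eq, List.length_append, List.length_singleton, h, id]
  field_simp; ring

lemma mem_Ntype (A : ℝ) (σ τ : List (Fin 3)) (h : σ.length = τ.length)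
    (h1 : -1 < amt1 (A / 7) σ τ) (h2 : amt1 (A / 7) σ τ < 1) :
    amt1 (A / 7) σ τ ∈ Ntype1 (A / 7) σ := by
  refine ⟨τ, h.symm, ?_, rfl⟩
  set t := amt1 (A / 7) σ τ with ht
  refine ⟨Sw1 (A / 7) τ ((1 - t) / 2), ⟨(1 + t) / 2, ⟨by linarith, by linarith⟩, ?_⟩,
    ⟨(1 - t) / 2, ⟨by linarith, by linarith⟩, rfl⟩⟩
  rw [Sw1_eq A τ, Sw1_eq A σ]
  unfold amt1 at ht
  have h7 : (7 : ℝ) ^ σ.length ≠ 0 := by positivity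
  have : Sw1 (A / 7) τ 0 = Sw1 (A / 7) σ 0 + t / 7 ^ σ.length := by
    rw [ht]; field_simp; ring
  rw [this, ← h]; field_simp; ring

lemma Ntype_finite (a : ℝ) (σ : List (Fin 3)) : (Ntype1 a σ).Finite := by
  refine ((List.finite_length_eq (Fin 3) σ.length).image (amt1 a σ)).subset ?_
  rintro t ⟨τ, h, -, rfl⟩
  exact ⟨τ, h, rfl⟩

lemma reach (n : ℕ) : ∃ σ τ : List (Fin 3), σ.length = τ.length ∧
    amt1 (Torb 0 / 7) σ τ = Torb n := by
  induction n with
  | zero =>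
    refine ⟨[] ++ [0], [] ++ [1], rfl, ?_⟩
    rw [amt_snoc _ _ _ rfl]; simp [amt1, dig, Sw1]
  | succ n ih =>
    obtain ⟨σ, τ, h, ht⟩ := ih
    rcases Torb_succ n with hs | hs
    · refine ⟨σ ++ [2], τ ++ [0], by simp [h], ?_⟩
      rw [amt_snoc _ _ _ h, ht, hs]; simp [dig]; ring
    · refine ⟨σ ++ [1], τ ++ [0], by simp [h], ?_⟩
      rw [amt_snoc _ _ _ h, ht, hs]; simp [dig]; ring

/-- the set of admissible translations -/
def Good (t : ℝ) : Prop := t = 0 ∨ 1 ≤ t ∨ t ≤ -1 ∨ ∃ n, t = Torb n ∨ t = -Torb n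

lemma Good_neg {t : ℝ} (h : Good t) : Good (-t) := by
  rcases h with h | h | h | ⟨n, h | h⟩
  · left; linarith
  · right; right; left; linarith
  · right; left; linarith
  · exact Or.inr (Or.inr (Or.inr ⟨n, Or.inr (by linarith)⟩))
  · exact Or.inr (Or.inr (Or.inr ⟨n, Or.inl (by linarith)⟩))

lemma dig_diff (A : ℝ) (i j : Fin 3) : dig A j - dig A i = 0 ∨ dig A j - dig A i = A ∨
    dig A j - dig A i = -A ∨ dig A j - dig A i = 6 ∨ dig A j - dig A i = -6 ∨
    dig A j - dig A i = 6 - A ∨ dig A j - dig A i = -(6 - A) := by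
  fin_cases i <;> fin_cases j <;> simp [dig]

lemma Good_orb (n : ℕ) (i j : Fin 3) : Good (7 * Torb n + (dig (Torb 0) j - dig (Torb 0) i)) := by
  have h0 := Torb_zero_ge
  have h0' := Torb_lt 0
  have h1 := Torb_ge (n + 1)
  have h1' := Torb_lt (n + 1)
  rcases Torb_succ n with hs | hs <;>
  rcases dig_diff (Torb 0) i j with h | h | h | h | h | h | h <;> rw [h] <;>
  first
  | exact Or.inr (Or.inl (by linarith))
  | exact Or.inr (Or.inr (Or.inl (by linarith)))
  | exact Or.inr (Or.inr (Or.inr ⟨n + 1, Or.inl (by linarith)⟩))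

lemma Good_step {t : ℝ} (ht : Good t) (i j : Fin 3) :
    Good (7 * t + (dig (Torb 0) j - dig (Torb 0) i)) := by
  have h0 := Torb_zero_ge
  have h0' := Torb_lt 0
  rcases ht with rfl | ht | ht | ⟨n, rfl | rfl⟩
  · rcases dig_diff (Torb 0) i j with h | h | h | h | h | h | h <;> rw [h] <;>
    first
    | exact Or.inl (by linarith)
    | exact Or.inr (Or.inl (by linarith))
    | exact Or.inr (Or.inr (Or.inl (by linarith)))
    | exact Or.inr (Or.inr (Or.inr ⟨0, Or.inl (by linarith)⟩))
    | exact Or.inr (Or.inr (Or.inr ⟨0, Or.inr (by linarith)⟩))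
  · rcases dig_diff (Torb 0) i j with h | h | h | h | h | h | h <;> rw [h] <;>
    exact Or.inr (Or.inl (by linarith))
  · rcases dig_diff (Torb 0) i j with h | h | h | h | h | h | h <;> rw [h] <;>
    exact Or.inr (Or.inr (Or.inl (by linarith)))
  · exact Good_orb n i j
  · have := Good_neg (Good_orb n j i)
    convert this using 1; ring

lemma Good_amt (k : ℕ) : ∀ σ τ : List (Fin 3), σ.length = k → τ.length = k →
    Good (amt1 (Torb 0 / 7) σ τ) := by
  induction k with
  | zero =>
    intro σ τ h h'
    rw [List.length_eq_zero_iff] at h h'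
    subst h h'
    left; simp [amt1]
  | succ k ih =>
    intro σ τ h h'
    rcases List.eq_nil_or_concat σ with rfl | ⟨σ', i, rfl⟩
    · simp at h
    rcases List.eq_nil_or_concat τ with rfl | ⟨τ', j, rfl⟩
    · simp at h'
    simp at h h'
    rw [List.concat_eq_append, List.concat_eq_append, amt_snoc _ _ _ (h.trans h'.symm)]
    exact Good_step (ih σ' τ' h h') i j

theorem stmt0 : ∃ a ∈ Ioo (0 : ℝ) (1 / 7), WSP1 a ∧ ¬ FTCco1 a := by
  have h0 := Torb_zero_ge
  have h0' := Torb_lt 0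
  refine ⟨Torb 0 / 7, ⟨by linarith, by linarith⟩, ⟨0.15, by norm_num, ?_⟩, ?_⟩
  · intro σ τ h hne
    rcases Good_amt _ σ τ rfl h.symm with h | h | h | ⟨n, h | h⟩
    · exact absurd h hne
    · rw [le_abs]; left; linarith
    · rw [le_abs]; right; linarith
    · rw [le_abs]; left; linarith [Torb_ge n]
    · rw [le_abs]; right; linarith [Torb_ge n]
  · intro hf
    have hU : (⋃₀ range (Ntype1 (Torb 0 / 7))).Finite := by
      refine hf.sUnion ?_
      rintro _ ⟨σ, rfl⟩
      exact Ntype_finite _ σ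
    refine Torb_infinite (hU.subset ?_)
    rintro _ ⟨n, rfl⟩
    obtain ⟨σ, τ, h, ht⟩ := reach n
    refine ⟨_, ⟨σ, rfl⟩, ?_⟩
    rw [← ht]
    exact mem_Ntype _ σ τ h (by rw [ht]; linarith [Torb_ge n]) (by rw [ht]; exact Torb_lt n)
end

section
/- There exists a real number a ∈ (0, 1/7) such that the iterated function system 𝒮₁(a) = {x/7, x/7 + a, x/7 + 6/7} satisfies the weak separation property and the open set V = ⋃_{n ≥ 0} ⋃_{σ ∈ {1,2,3}^n} S_σ((3/7, 4/7)) witnesses the open set condition: V is nonempty and open, S_i(V) ⊆ V for i = 1, 2, 3, and S_i(V) ∩ S_j(V) = ∅ for all i ≠ j. -/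
open Set

/-- The open set V = ⋃_{n ≥ 0} ⋃_{σ ∈ {1,2,3}^n} S_σ((3/7, 4/7)). -/
noncomputable def Vosc (a : ℝ) : Set ℝ :=
  ⋃ σ : List (Fin 3), Sw1 a σ '' Ioo (3 / 7) (4 / 7)

lemma S1_zero (a x : ℝ) : S1 a 0 x = x / 7 := rfl
lemma S1_one (a x : ℝ) : S1 a 1 x = x / 7 + a := rfl
lemma S1_two (a x : ℝ) : S1 a 2 x = x / 7 + 6 / 7 := rfl

lemma S1_form (a : ℝ) (i : Fin 3) : ∃ c : ℝ, S1 a i = fun x => x / 7 + c := by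
  fin_cases i
  · exact ⟨0, by funext x; simp [S1]⟩
  · exact ⟨a, rfl⟩
  · exact ⟨6 / 7, rfl⟩

lemma S1_openMap (a : ℝ) (i : Fin 3) : IsOpenMap (S1 a i) := by
  obtain ⟨c, hc⟩ := S1_form a i
  rw [hc]
  have h := ((Homeomorph.mulRight₀ (7⁻¹ : ℝ) (by norm_num)).trans
    (Homeomorph.addRight c)).isOpenMap
  convert h using 1
  funext x
  simp [div_eq_mul_inv]

lemma Sw1_openMap (a : ℝ) (σ : List (Fin 3)) : IsOpenMap (Sw1 a σ) := by
  induction σ with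
  | nil => exact IsOpenMap.id
  | cons i σ ih => exact (S1_openMap a i).comp ih

lemma Sw1_hull (σ : List (Fin 3)) (x : ℝ) (hx : x ∈ Ioo (0 : ℝ) 1) :
    Sw1 (1 / 35) σ x ∈ Ioo (0 : ℝ) 1 := by
  induction σ with
  | nil => exact hx
  | cons i σ ih =>
    obtain ⟨h0, h1⟩ := ih
    change S1 (1 / 35) i (Sw1 (1 / 35) σ x) ∈ _
    generalize Sw1 (1 / 35) σ x = y at h0 h1
    fin_cases i
    · exact ⟨by simp only [Fin.zero_eta, S1_zero]; linarith,
        by simp only [Fin.zero_eta, S1_zero]; linarith⟩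
    · exact ⟨by simp only [Fin.mk_one, S1_one]; linarith,
        by simp only [Fin.mk_one, S1_one]; linarith⟩
    · exact ⟨by simp only [Fin.reduceFinMk, S1_two]; linarith,
        by simp only [Fin.reduceFinMk, S1_two]; linarith⟩

/-- First-level location of points of V. -/
lemma V_loc (y : ℝ) (hy : y ∈ Vosc (1 / 35)) :
    (0 < y ∧ y < 6 / 35) ∨ (3 / 7 < y ∧ y < 4 / 7) ∨ (6 / 7 < y ∧ y < 1) := by
  obtain ⟨σ, x, hx, rfl⟩ := mem_iUnion.1 hy
  cases σ with
  | nil => exact Or.inr (Or.inl hx)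
  | cons i σ =>
    obtain ⟨h0, h1⟩ := Sw1_hull σ x ⟨by linarith [hx.1], by linarith [hx.2]⟩
    change (0 < S1 (1 / 35) i (Sw1 (1 / 35) σ x) ∧ S1 (1 / 35) i (Sw1 (1 / 35) σ x) < _) ∨
      (_ < S1 (1 / 35) i (Sw1 (1 / 35) σ x) ∧ S1 (1 / 35) i (Sw1 (1 / 35) σ x) < _) ∨
      (_ < S1 (1 / 35) i (Sw1 (1 / 35) σ x) ∧ S1 (1 / 35) i (Sw1 (1 / 35) σ x) < _)
    generalize Sw1 (1 / 35) σ x = y at h0 h1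
    fin_cases i
    · left; simp only [Fin.zero_eta, S1_zero]; constructor <;> linarith
    · left; simp only [Fin.mk_one, S1_one]; constructor <;> linarith
    · right; right; simp only [Fin.reduceFinMk, S1_two]; constructor <;> linarith

lemma Sw1_int (σ : List (Fin 3)) :
    ∃ m : ℤ, 5 * (7 ^ σ.length * Sw1 (1 / 35) σ 0) = (m : ℝ) := by
  induction σ with
  | nil => exact ⟨0, by simp [Sw1]⟩
  | cons i σ ih =>
    obtain ⟨m, hm⟩ := ih
    simp only [List.length_cons, Sw1, Function.comp]
    generalize Sw1 (1 / 35) σ 0 = y at hm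
    generalize σ.length = k at hm
    fin_cases i
    · refine ⟨m, ?_⟩
      simp only [Fin.zero_eta, S1_zero]; rw [← hm]; ring
    · refine ⟨m + 7 ^ k, ?_⟩
      simp only [Fin.mk_one, S1_one]; push_cast; rw [← hm]; ring
    · refine ⟨m + 30 * 7 ^ k, ?_⟩
      simp only [Fin.reduceFinMk, S1_two]; push_cast; rw [← hm]; ring

lemma wsp : WSP1 (1 / 35) := by
  refine ⟨1 / 5, by norm_num, fun σ τ hl hne => ?_⟩
  obtain ⟨m, hm⟩ := Sw1_int σ
  obtain ⟨n, hn⟩ := Sw1_int τ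
  have h : amt1 (1 / 35) σ τ = ((n - m : ℤ) : ℝ) / 5 := by
    unfold amt1
    push_cast
    rw [← hm, ← hn, hl]; ring
  rw [h] at hne ⊢
  have h2 : n - m ≠ 0 := by
    intro h0; rw [h0] at hne; simp at hne
  have h3 : (1 : ℝ) ≤ |((n - m : ℤ) : ℝ)| := by
    exact_mod_cast Int.one_le_abs h2
  rw [abs_div, abs_of_pos (by norm_num : (0 : ℝ) < 5)]
  linarith

lemma disj_aux (i j : Fin 3) (h : i < j) (x y : ℝ) (hx : x ∈ Vosc (1 / 35))
    (hy : y ∈ Vosc (1 / 35)) : S1 (1 / 35) i x ≠ S1 (1 / 35) j y := by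
  intro e
  have hx := V_loc x hx
  have hy := V_loc y hy
  fin_cases i <;> fin_cases j <;>
    simp only [Fin.zero_eta, Fin.mk_one, Fin.reduceFinMk, S1_zero, S1_one, S1_two] at e h <;>
    first
    | exact absurd h (by decide)
    | (rcases hx with hx | hx | hx <;> rcases hy with hy | hy | hy <;>
        linarith [hx.1, hx.2, hy.1, hy.2])

theorem stmt6 : ∃ a ∈ Ioo (0 : ℝ) (1 / 7),
    WSP1 a ∧
    (Vosc a).Nonempty ∧ IsOpen (Vosc a) ∧
    (∀ i, S1 a i '' Vosc a ⊆ Vosc a) ∧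
    (∀ i j, i ≠ j → S1 a i '' Vosc a ∩ S1 a j '' Vosc a = ∅) := by
  refine ⟨1 / 35, ⟨by norm_num, by norm_num⟩, wsp, ?_, ?_, ?_, ?_⟩
  · exact ⟨1 / 2, mem_iUnion.2 ⟨[], 1 / 2, ⟨by norm_num, by norm_num⟩, rfl⟩⟩
  · exact isOpen_iUnion fun σ => Sw1_openMap _ σ _ isOpen_Ioo
  · rintro i _ ⟨y, hy, rfl⟩
    obtain ⟨σ, x, hx, rfl⟩ := mem_iUnion.1 hy
    exact mem_iUnion.2 ⟨i :: σ, x, hx, rfl⟩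
  · intro i j hij
    rw [eq_empty_iff_forall_notMem]
    rintro _ ⟨⟨x, hx, rfl⟩, ⟨y, hy, e⟩⟩
    rcases lt_or_gt_of_ne hij with h | h
    · exact disj_aux i j h x y hx hy e.symm
    · exact disj_aux j i h y x hy hx e
end

section
/- Let 0 < r < 1 and let S_i(x) = r x + d_i, i = 1, …, n, be an equicontractive iterated function system on ℝ whose attractor K satisfies {0,1} ⊆ K ⊆ [0,1]. If the IFS satisfies the open set condition with the open set V = (0,1) (the convex open set condition), then for every k ≥ 0 and all distinct words σ, τ of length k over {1,…,n}, the translation amount a_{σ,τ} = r^{-k}(S_τ(0) − S_σ(0)) satisfies |a_{σ,τ}| ≥ 1; in particular the IFS satisfies the weak separation property. -/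
open Set

/-- For a word σ = (s₁,…,s_k), the composition S_σ = S_{s₁} ∘ ⋯ ∘ S_{s_k}. -/
def compW {n : ℕ} (S : Fin n → ℝ → ℝ) : List (Fin n) → ℝ → ℝ
  | [] => id
  | i :: σ => S i ∘ compW S σ

theorem aux_range {n : ℕ} (r : ℝ) (hr0 : 0 < r)
    (d : Fin n → ℝ) (S : Fin n → ℝ → ℝ) (hS : ∀ i x, S i x = r * x + d i)
    (hd : ∀ i, 0 ≤ d i ∧ d i ≤ 1 - r) (σ : List (Fin n)) :
    0 ≤ compW S σ 0 ∧ compW S σ 0 ≤ 1 - r ^ σ.length := by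
  induction σ with
  | nil => simp [compW]
  | cons i σ ih =>
    simp only [compW, Function.comp, hS, List.length_cons, pow_succ]
    obtain ⟨h1, h2⟩ := hd i
    obtain ⟨h3, h4⟩ := ih
    constructor
    · positivity
    · nlinarith

theorem aux_sep {n : ℕ} (r : ℝ) (hr0 : 0 < r)
    (d : Fin n → ℝ) (S : Fin n → ℝ → ℝ) (hS : ∀ i x, S i x = r * x + d i)
    (hd : ∀ i, 0 ≤ d i ∧ d i ≤ 1 - r)
    (hsep : ∀ i j, i ≠ j → r ≤ |d j - d i|) (σ : List (Fin n)) :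
    ∀ τ : List (Fin n), σ.length = τ.length → σ ≠ τ →
      r ^ σ.length ≤ |compW S τ 0 - compW S σ 0| := by
  induction σ with
  | nil =>
    intro τ h hne
    cases τ with
    | nil => exact absurd rfl hne
    | cons j τ => simp at h
  | cons i σ ih =>
    intro τ h hne
    cases τ with
    | nil => simp at h
    | cons j τ =>
      have hl : σ.length = τ.length := by simpa using h
      have h1 := aux_range r hr0 d S hS hd σ
      have h2 := aux_range r hr0 d S hS hd τ
      rw [← hl] at h2
      simp only [compW, Function.comp, hS, List.length_cons, pow_succ]
      by_cases hij : i = j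
      · subst hij
        have h3 := ih τ hl (fun e => hne (by rw [e]))
        have e : r * compW S τ 0 + d i - (r * compW S σ 0 + d i)
            = (compW S τ 0 - compW S σ 0) * r := by ring
        rw [e, abs_mul, abs_of_pos hr0]
        exact mul_le_mul_of_nonneg_right h3 hr0.le
      · rcases le_abs.1 (hsep i j hij) with h3 | h3
        · apply le_abs.2; left; nlinarith
        · apply le_abs.2; right; nlinarith

theorem stmt8 {n : ℕ} (r : ℝ) (hr0 : 0 < r) (hr1 : r < 1)
    (d : Fin n → ℝ) (S : Fin n → ℝ → ℝ) (hS : ∀ i x, S i x = r * x + d i)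
    (K : Set ℝ) (hKne : K.Nonempty) (hKcpt : IsCompact K)
    (hKinv : K = ⋃ i, S i '' K)
    (hK01 : ({0, 1} : Set ℝ) ⊆ K) (hKsub : K ⊆ Icc 0 1)
    (hOSCco : (∀ i, S i '' Ioo 0 1 ⊆ Ioo 0 1) ∧
      ∀ i j, i ≠ j → S i '' Ioo 0 1 ∩ S j '' Ioo 0 1 = ∅) :
    (∀ σ τ : List (Fin n), σ.length = τ.length → σ ≠ τ →
      1 ≤ |(r ^ σ.length)⁻¹ * (compW S τ 0 - compW S σ 0)|) ∧
    (∃ ε > 0, ∀ σ τ : List (Fin n), σ.length = τ.length →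
      (r ^ σ.length)⁻¹ * (compW S τ 0 - compW S σ 0) ≠ 0 →
      ε ≤ |(r ^ σ.length)⁻¹ * (compW S τ 0 - compW S σ 0)|) := by
  have h0 : (0 : ℝ) ∈ K := hK01 (by simp)
  have h1 : (1 : ℝ) ∈ K := hK01 (by simp)
  have hmem : ∀ i x, x ∈ K → S i x ∈ Icc (0 : ℝ) 1 := fun i x hx => by
    apply hKsub
    rw [hKinv]
    exact mem_iUnion.2 ⟨i, x, hx, rfl⟩
  have hd : ∀ i, 0 ≤ d i ∧ d i ≤ 1 - r := fun i => by
    have a := (hmem i 0 h0).1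
    have b := (hmem i 1 h1).2
    rw [hS] at a b
    constructor <;> linarith
  have hsep : ∀ i j, i ≠ j → r ≤ |d j - d i| := by
    intro i j hij
    by_contra hlt
    push Not at hlt
    obtain ⟨hl, hu⟩ := abs_lt.1 hlt
    have key : (d i + d j + r) / 2 ∈ S i '' Ioo 0 1 ∩ S j '' Ioo 0 1 := by
      constructor
      · refine ⟨((d j - d i) / r + 1) / 2, ⟨?_, ?_⟩, ?_⟩
        · have : -1 < (d j - d i) / r := by rw [lt_div_iff₀ hr0]; linarith
          linarith
        · have : (d j - d i) / r < 1 := by rw [div_lt_iff₀ hr0]; linarith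
          linarith
        · rw [hS]; field_simp; ring
      · refine ⟨((d i - d j) / r + 1) / 2, ⟨?_, ?_⟩, ?_⟩
        · have : -1 < (d i - d j) / r := by rw [lt_div_iff₀ hr0]; linarith
          linarith
        · have : (d i - d j) / r < 1 := by rw [div_lt_iff₀ hr0]; linarith
          linarith
        · rw [hS]; field_simp; ring
    rw [hOSCco.2 i j hij] at key
    exact key
  have main : ∀ σ τ : List (Fin n), σ.length = τ.length → σ ≠ τ →
      1 ≤ |(r ^ σ.length)⁻¹ * (compW S τ 0 - compW S σ 0)| := by
    intro σ τ hl hne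
    have h := aux_sep r hr0 d S hS hd hsep σ τ hl hne
    have hp : 0 < r ^ σ.length := pow_pos hr0 _
    rw [abs_mul, abs_of_pos (inv_pos.2 hp), inv_mul_eq_div, le_div_iff₀ hp]
    linarith
  refine ⟨main, 1, one_pos, fun σ τ hl hne => main σ τ hl ?_⟩
  rintro rfl
  simp at hne
end

section
/- For every real number a ∈ ℝ, the iterated function system 𝒮₂(a) = {x/16, x/16 + a, x/16 + 15/16 − 16a, x/16 + 11/16, x/16 + 15/16} does not satisfy the open set condition: for every nonempty open set V ⊆ ℝ with S_i(V) ⊆ V for all i, one has S₁(V) ∩ S₂(V) ≠ ∅, since S₁ ∘ S₅ = S₂ ∘ S₃. -/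
open Set

/-- The IFS 𝒮₂(a) = {x/16, x/16 + a, x/16 + 15/16 − 16a, x/16 + 11/16, x/16 + 15/16}. -/
noncomputable def S2 (a : ℝ) : Fin 5 → ℝ → ℝ :=
  ![fun x => x / 16, fun x => x / 16 + a, fun x => x / 16 + 15 / 16 - 16 * a,
    fun x => x / 16 + 11 / 16, fun x => x / 16 + 15 / 16]

/-- For a word σ = (s₁,…,s_k), the composition S_σ = S_{s₁} ∘ ⋯ ∘ S_{s_k}. -/
noncomputable def Sw2 (a : ℝ) : List (Fin 5) → ℝ → ℝ
  | [] => id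
  | i :: σ => S2 a i ∘ Sw2 a σ

/-- For words σ, τ of the same length k, S_σ⁻¹ ∘ S_τ is the translation by
`amt2 a σ τ = 16 ^ k * (S_τ(0) − S_σ(0))`. -/
noncomputable def amt2 (a : ℝ) (σ τ : List (Fin 5)) : ℝ :=
  16 ^ σ.length * (Sw2 a τ 0 - Sw2 a σ 0)

/-- The weak separation property for 𝒮₂(a). -/
def WSP2 (a : ℝ) : Prop :=
  ∃ ε > 0, ∀ σ τ : List (Fin 5), σ.length = τ.length →
    amt2 a σ τ ≠ 0 → ε ≤ |amt2 a σ τ|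

/-- The neighbourhood type of a word σ relative to an open set V. -/
noncomputable def Ntype2 (a : ℝ) (V : Set ℝ) (σ : List (Fin 5)) : Set ℝ :=
  { t | ∃ τ : List (Fin 5), τ.length = σ.length ∧
      (Sw2 a σ '' V ∩ Sw2 a τ '' V).Nonempty ∧ t = amt2 a σ τ }

/-- The open set condition for 𝒮₂(a). -/
def OSC2 (a : ℝ) : Prop :=
  ∃ V : Set ℝ, V.Nonempty ∧ IsOpen V ∧ (∀ i, S2 a i '' V ⊆ V) ∧
    ∀ i j, i ≠ j → S2 a i '' V ∩ S2 a j '' V = ∅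

/-- The convex open set condition for 𝒮₂(a): OSC with V = (0,1). -/
def OSCco2 (a : ℝ) : Prop :=
  (∀ i, S2 a i '' Ioo 0 1 ⊆ Ioo 0 1) ∧
    ∀ i j, i ≠ j → S2 a i '' Ioo 0 1 ∩ S2 a j '' Ioo 0 1 = ∅

/-- The finite type condition for 𝒮₂(a): some nonempty open invariant V admits only
finitely many neighbourhood types. -/
def FTC2 (a : ℝ) : Prop :=
  ∃ V : Set ℝ, V.Nonempty ∧ IsOpen V ∧ (∀ i, S2 a i '' V ⊆ V) ∧
    (Set.range (Ntype2 a V)).Finite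

/-- The convex finite type condition for 𝒮₂(a): finitely many neighbourhood types
relative to (0,1). -/
def FTCco2 (a : ℝ) : Prop := (Set.range (Ntype2 a (Ioo 0 1))).Finite

theorem stmt10 : ∀ a : ℝ,
    S2 a 0 ∘ S2 a 4 = S2 a 1 ∘ S2 a 2 ∧
    (∀ V : Set ℝ, V.Nonempty → IsOpen V → (∀ i, S2 a i '' V ⊆ V) →
      (S2 a 0 '' V ∩ S2 a 1 '' V).Nonempty) ∧
    ¬ OSC2 a := by
  intro a
  have key : S2 a 0 ∘ S2 a 4 = S2 a 1 ∘ S2 a 2 := by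
    funext x
    simp [S2]
    ring
  have inter : ∀ V : Set ℝ, V.Nonempty → IsOpen V → (∀ i, S2 a i '' V ⊆ V) →
      (S2 a 0 '' V ∩ S2 a 1 '' V).Nonempty := by
    rintro V ⟨x, hx⟩ _ hV
    exact ⟨S2 a 0 (S2 a 4 x), ⟨S2 a 4 x, hV 4 ⟨x, hx, rfl⟩, rfl⟩,
      ⟨S2 a 2 x, hV 2 ⟨x, hx, rfl⟩, (congrFun key x).symm⟩⟩
  refine ⟨key, inter, ?_⟩
  rintro ⟨V, hne, ho, hV, hd⟩
  exact (inter V hne ho hV).ne_empty (hd 0 1 (by decide))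
end

section
/- There exists a real number a ∈ (0, 1/16) such that the iterated function system 𝒮₂(a) = {x/16, x/16 + a, x/16 + 15/16 − 16a, x/16 + 11/16, x/16 + 15/16} satisfies the weak separation property and the finite type condition (there is a nonempty open set V with S_i(V) ⊆ V for all i and only finitely many neighbourhood types relative to V), but satisfies neither the open set condition, nor the convex open set condition, nor the convex finite type condition. -/
open Set

namespace Stmt11Aux

/-- digits -/
noncomputable def D (b : ℝ) : Fin 5 → ℝ := ![0, b, 15 - 16 * b, 11, 15]

theorem S2_eq (b : ℝ) (i : Fin 5) (x : ℝ) : S2 (b / 16) i x = (x + D b i) / 16 := by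
  fin_cases i <;> simp [S2, D] <;> ring

theorem Sw2_eq (a : ℝ) (σ : List (Fin 5)) (x : ℝ) :
    Sw2 a σ x = Sw2 a σ 0 + x / 16 ^ σ.length := by
  induction σ generalizing x with
  | nil => simp [Sw2]
  | cons i σ ih =>
    have h : a = (16 * a) / 16 := by ring
    simp only [Sw2, Function.comp_apply, List.length_cons]
    rw [h, S2_eq, S2_eq, ← h, ih x, pow_succ]
    field_simp
    ring

theorem Sw2_append (a : ℝ) (σ : List (Fin 5)) (i : Fin 5) (x : ℝ) :
    Sw2 a (σ ++ [i]) x = Sw2 a σ (S2 a i x) := by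
  induction σ with
  | nil => simp [Sw2]
  | cons j σ ih => simp [Sw2, ih]

theorem amt_append (b : ℝ) (σ τ : List (Fin 5)) (h : σ.length = τ.length) (i j : Fin 5) :
    amt2 (b / 16) (σ ++ [i]) (τ ++ [j]) = 16 * amt2 (b / 16) σ τ + (D b j - D b i) := by
  unfold amt2
  rw [Sw2_append, Sw2_append, S2_eq, S2_eq, Sw2_eq _ σ, Sw2_eq _ τ, ← h]
  simp only [List.length_append, List.length_singleton, pow_succ]
  field_simp
  ring

theorem Sw2_eq_iff (a : ℝ) (σ τ : List (Fin 5)) (h : σ.length = τ.length) (x y : ℝ) :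
    Sw2 a σ x = Sw2 a τ y ↔ x = y + amt2 a σ τ := by
  unfold amt2
  rw [Sw2_eq a σ x, Sw2_eq a τ y, ← h]
  have hp : (0 : ℝ) < 16 ^ σ.length := by positivity
  field_simp
  constructor <;> intro h <;> linarith

/-- numbers with base-16 digits 4 and 15 -/
noncomputable def X (f : ℕ → Bool) : ℝ := 4 / 15 + 11 / 16 * Cardinal.cantorFunction (1 / 16) f

def sh (f : ℕ → Bool) : ℕ → Bool := fun n => f (n + 1)

theorem X_succ (f : ℕ → Bool) : 16 * X f = cond (f 0) 15 4 + X (sh f) := by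
  unfold X
  rw [Cardinal.cantorFunction_succ f (by norm_num) (by norm_num)]
  unfold sh
  cases f 0 <;> simp <;> ring

theorem X_ge (f : ℕ → Bool) : 4 / 15 ≤ X f := by
  unfold X
  have : 0 ≤ Cardinal.cantorFunction (1 / 16) f :=
    tsum_nonneg fun n => Cardinal.cantorFunctionAux_nonneg (by norm_num)
  linarith

theorem X_le (f : ℕ → Bool) : X f ≤ 1 := by
  unfold X
  have h1 : Cardinal.cantorFunction (1 / 16) f ≤ Cardinal.cantorFunction (1 / 16) (fun _ => true) :=
    Cardinal.cantorFunction_le (by norm_num) (by norm_num) (fun _ _ => rfl)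
  have h2 := Cardinal.cantorFunction_succ (c := 1 / 16) (fun _ => true) (by norm_num) (by norm_num)
  simp only [cond_true] at h2
  linarith

theorem X_inj : Function.Injective X := by
  intro f g h
  unfold X at h
  exact Cardinal.cantorFunction_injective (c := 1 / 16) (by norm_num) (by norm_num) (by linarith)

theorem exists_irr : ∃ f, Irrational (X f) := by
  by_contra hc
  push Not at hc
  have h1 : (Set.range X).Countable := by
    refine (Set.countable_range ((↑) : ℚ → ℝ)).mono ?_
    rintro _ ⟨f, rfl⟩
    have := hc f
    unfold Irrational at this
    push Not at this
    exact this
  have h2 : Countable (ℕ → Bool) := by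
    rw [← Set.countable_univ_iff]
    rw [← Set.image_univ] at h1
    exact (Set.countable_of_injective_of_countable_image X_inj.injOn h1)
  have h3 := Cardinal.mk_le_aleph0 (α := ℕ → Bool)
  have h4 : Cardinal.aleph0 < Cardinal.mk (ℕ → Bool) := by
    have := Cardinal.cantor Cardinal.aleph0
    simpa only [Cardinal.mk_pi, Cardinal.mk_bool, Cardinal.prod_const, Cardinal.mk_nat, Cardinal.lift_id, Cardinal.lift_ofNat] using this
  exact absurd h3 (not_le.mpr h4)

theorem exists_g : ∃ g, g 0 = true ∧ Irrational (X g) := by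
  obtain ⟨f, hf⟩ := exists_irr
  refine ⟨fun n => Nat.casesOn n true f, rfl, ?_⟩
  have h := X_succ (fun n => Nat.casesOn n true f)
  have h2 : sh (fun n => Nat.casesOn n true f) = f := rfl
  rw [h2] at h
  change 16 * X _ = 15 + X f at h
  rintro ⟨q, hq⟩
  apply hf
  refine ⟨16 * q - 15, ?_⟩
  push_cast
  rw [hq]; linarith

theorem X_iter (g : ℕ → Bool) (m : ℕ) : ∃ N : ℤ, 16 ^ m * X g = N + X (sh^[m] g) := by
  induction m with
  | zero => exact ⟨0, by simp⟩
  | succ m ih =>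
    obtain ⟨N, hN⟩ := ih
    rw [Function.iterate_succ_apply']
    have h := X_succ (sh^[m] g)
    refine ⟨16 * N + cond ((sh^[m] g) 0) 15 4, ?_⟩
    rw [pow_succ]
    cases h0 : (sh^[m] g) 0 <;> simp only [h0, cond_true, cond_false] at h ⊢ <;> push_cast <;>
      linarith

theorem X_iter_ne (g : ℕ → Bool) (hg : Irrational (X g)) {m n : ℕ} (h : m < n) :
    X (sh^[m] g) ≠ X (sh^[n] g) := by
  intro he
  obtain ⟨N, hN⟩ := X_iter g m
  obtain ⟨M, hM⟩ := X_iter g n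
  have hp : (16 : ℝ) ^ m < 16 ^ n := pow_lt_pow_right₀ (by norm_num) h
  apply hg
  refine ⟨(M - N) / (16 ^ n - 16 ^ m), ?_⟩
  push_cast
  rw [div_eq_iff (by linarith)]
  linarith

theorem X_iter_lt (g : ℕ → Bool) (hg : Irrational (X g)) (m : ℕ) : X (sh^[m] g) < 1 := by
  refine lt_of_le_of_ne (X_le _) ?_
  intro he
  obtain ⟨N, hN⟩ := X_iter g m
  apply hg
  refine ⟨(N + 1) / 16 ^ m, ?_⟩
  push_cast
  rw [div_eq_iff (by positivity)]
  linarith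

/-- the parameter, scaled by 16 -/
noncomputable def B (g : ℕ → Bool) : ℝ := (11 + X g) / 16

def G (g : ℕ → Bool) (t : ℝ) : Prop := 1 ≤ t ∨ t = 0 ∨ t = B g ∨ ∃ f, t = X f

def Good (g : ℕ → Bool) (t : ℝ) : Prop := G g t ∨ G g (-t)

theorem Xg_ge (g : ℕ → Bool) (hg : g 0 = true) : 15 / 16 + 1 / 60 ≤ X g := by
  have h := X_succ g
  have h2 := X_ge (sh g)
  rw [hg] at h
  simp only [cond_true] at h
  linarith

theorem step (g : ℕ → Bool) (hg : g 0 = true) (t : ℝ) (ht : G g t) (i j : Fin 5) :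
    Good g (16 * t + (D (B g) j - D (B g) i)) := by
  have h1 := Xg_ge g hg
  have h2 := X_le g
  have hB : 16 * B g = 11 + X g := by unfold B; ring
  generalize hb : B g = b at *
  rcases ht with ht | ht | ht | ⟨f, ht⟩
  · left; left
    fin_cases i <;> fin_cases j <;> simp [D] <;> linarith
  · subst ht
    fin_cases i <;> fin_cases j <;>
    first
    | (left; left; simp [D] <;> linarith)
    | (right; left; simp [D] <;> linarith)
    | (left; right; left; simp [D] <;> linarith)
    | (left; right; right; left; simp [D, hb] <;> linarith)
    | (right; right; right; left; simp [D, hb] <;> linarith)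
  · rw [hb] at ht
    subst ht
    fin_cases i <;> fin_cases j <;>
    first
    | (left; left; simp [D] <;> linarith)
    | (right; left; simp [D] <;> linarith)
    | (left; right; left; simp [D] <;> linarith)
    | (left; right; right; right; refine ⟨g, ?_⟩; simp [D] <;> linarith)
  · have h3 := X_succ f
    have h4 := X_ge (sh f)
    have h5 := X_le (sh f)
    subst ht
    cases h0 : f 0 <;> simp only [h0, cond_true, cond_false] at h3 <;>
    fin_cases i <;> fin_cases j <;>
    first
    | (left; left; simp [D] <;> linarith)
    | (right; left; simp [D] <;> linarith)
    | (left; right; right; right; refine ⟨sh f, ?_⟩; simp [D] <;> linarith)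

theorem good_amt (g : ℕ → Bool) (hg : g 0 = true) (σ : List (Fin 5)) :
    ∀ τ : List (Fin 5), σ.length = τ.length → Good g (amt2 (B g / 16) σ τ) := by
  induction σ using List.reverseRecOn with
  | nil =>
    intro τ h
    have : τ = [] := by simpa using h.symm
    subst this
    left; right; left; simp [amt2]
  | append_singleton σ i ih =>
    intro τ h
    induction τ using List.reverseRecOn with
    | nil => simp at h
    | append_singleton τ j _ =>
      have h' : σ.length = τ.length := by simpa using h
      rw [amt_append _ _ _ h']
      rcases ih τ h' with ht | ht
      · exact step g hg _ ht i j
      · have := step g hg _ ht j i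
        unfold Good at this ⊢
        rw [show -(16 * amt2 (B g / 16) σ τ + (D (B g) j - D (B g) i)) =
          16 * -amt2 (B g / 16) σ τ + (D (B g) i - D (B g) j) by ring]
        rw [show -(16 * -amt2 (B g / 16) σ τ + (D (B g) i - D (B g) j)) =
          16 * amt2 (B g / 16) σ τ + (D (B g) j - D (B g) i) by ring] at this
        exact this.symm

theorem G_bound (g : ℕ → Bool) (hg : g 0 = true) (t : ℝ) (h : G g t) : t = 0 ∨ 1 / 4 ≤ t := by
  have h1 := Xg_ge g hg
  rcases h with h | h | h | ⟨f, h⟩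
  · right; linarith
  · left; exact h
  · right; rw [h]; unfold B; linarith
  · right; have := X_ge f; linarith

theorem wsp (g : ℕ → Bool) (hg : g 0 = true) : WSP2 (B g / 16) := by
  refine ⟨1 / 4, by norm_num, fun σ τ h h0 => ?_⟩
  rcases good_amt g hg σ τ h with h1 | h1
  · rcases G_bound g hg _ h1 with h2 | h2
    · exact absurd h2 h0
    · exact h2.trans (le_abs_self _)
  · rcases G_bound g hg _ h1 with h2 | h2
    · exact absurd (neg_eq_zero.mp h2) h0
    · exact h2.trans (neg_le_abs _)

def V (a : ℝ) : Set ℝ := {x | ∃ σ : List (Fin 5), ∃ u ∈ Ioo (1 / 16 : ℝ) (2 / 16), x = Sw2 a σ u}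

theorem D_bounds (g : ℕ → Bool) (hg : g 0 = true) (i : Fin 5) : 0 ≤ D (B g) i ∧ D (B g) i ≤ 15 := by
  have h1 := Xg_ge g hg
  have h2 := X_le g
  fin_cases i <;> simp [D, B] <;> (try constructor) <;> linarith

theorem Sw_mem (g : ℕ → Bool) (hg : g 0 = true) (σ : List (Fin 5)) (u : ℝ)
    (hu : u ∈ Ioo (0 : ℝ) 1) : Sw2 (B g / 16) σ u ∈ Ioo (0 : ℝ) 1 := by
  induction σ with
  | nil => exact hu
  | cons i σ ih =>
    obtain ⟨h1, h2⟩ := D_bounds g hg i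
    obtain ⟨h3, h4⟩ := ih
    simp only [Sw2, Function.comp_apply]
    rw [S2_eq]
    constructor <;> linarith

theorem V_sub (g : ℕ → Bool) (hg : g 0 = true) {x : ℝ} (hx : x ∈ V (B g / 16)) :
    x ∈ Ioo (0 : ℝ) 1 := by
  obtain ⟨σ, u, ⟨h1, h2⟩, rfl⟩ := hx
  exact Sw_mem g hg σ u ⟨by linarith, by linarith⟩

theorem V_disj (g : ℕ → Bool) (hg : g 0 = true) (σ : List (Fin 5)) :
    ∀ (τ : List (Fin 5)) (f : ℕ → Bool) (u v : ℝ), u ∈ Ioo (1 / 16 : ℝ) (2 / 16) →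
      v ∈ Ioo (1 / 16 : ℝ) (2 / 16) →
      Sw2 (B g / 16) σ u ≠ Sw2 (B g / 16) τ v + X f := by
  have h1 := Xg_ge g hg
  have h2 := X_le g
  induction σ with
  | nil =>
    intro τ f u v hu hv he
    have h3 := (Sw_mem g hg τ v ⟨by linarith [hv.1], by linarith [hv.2]⟩).1
    have h4 := X_ge f
    simp only [Sw2, id] at he
    linarith [hu.2]
  | cons i σ ih =>
    intro τ f u v hu hv he
    obtain ⟨h3, h4⟩ := Sw_mem g hg σ u ⟨by linarith [hu.1], by linarith [hu.2]⟩
    have h5 := X_succ f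
    have h6 := X_ge (sh f)
    have h7 := X_le (sh f)
    cases τ with
    | nil =>
      simp only [Sw2, Function.comp_apply, id] at he
      rw [S2_eq] at he
      obtain ⟨h8, h9⟩ := hv
      generalize Sw2 (B g / 16) σ u = y at *
      cases h0 : f 0 <;> simp only [h0, cond_true, cond_false] at h5 <;>
      fin_cases i <;> simp [D, B] at he <;> linarith
    | cons j τ =>
      obtain ⟨h8, h9⟩ := Sw_mem g hg τ v ⟨by linarith [hv.1], by linarith [hv.2]⟩
      have ih' := ih τ (sh f) u v hu hv
      simp only [Sw2, Function.comp_apply] at he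
      rw [S2_eq, S2_eq] at he
      generalize Sw2 (B g / 16) σ u = y at *
      generalize Sw2 (B g / 16) τ v = z at *
      cases h0 : f 0 <;> simp only [h0, cond_true, cond_false] at h5 <;>
      fin_cases i <;> fin_cases j <;> simp [D, B] at he <;>
      first
      | linarith
      | (apply ih'; linarith)

theorem ftc (g : ℕ → Bool) (hg : g 0 = true) : FTC2 (B g / 16) := by
  refine ⟨V (B g / 16), ?_, ?_, ?_, ?_⟩
  · exact ⟨3 / 32, [], 3 / 32, ⟨by norm_num, by norm_num⟩, rfl⟩
  · have : V (B g / 16) = ⋃ σ : List (Fin 5),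
        (fun x => 16 ^ σ.length * (x - Sw2 (B g / 16) σ 0)) ⁻¹' Ioo (1 / 16 : ℝ) (2 / 16) := by
      ext x
      simp only [V, mem_setOf_eq, mem_iUnion, mem_preimage]
      refine exists_congr fun σ => ?_
      constructor
      · rintro ⟨u, hu, rfl⟩
        rw [Sw2_eq]
        convert hu using 1
        field_simp
        ring
      · intro h
        refine ⟨_, h, ?_⟩
        rw [Sw2_eq _ σ (_ * _)]
        field_simp
        ring
    rw [this]
    exact isOpen_iUnion fun σ => isOpen_Ioo.preimage (by fun_prop)
  · rintro i _ ⟨_, ⟨σ, u, hu, rfl⟩, rfl⟩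
    exact ⟨i :: σ, u, hu, rfl⟩
  · have hfin : ({0, B g, -B g} : Set ℝ).Finite := by simp
    refine hfin.finite_subsets.subset ?_
    rintro _ ⟨σ, rfl⟩
    rintro t ⟨τ, hl, ⟨_, ⟨x, hx, rfl⟩, ⟨y, hy, hxy⟩⟩, rfl⟩
    rw [eq_comm, Sw2_eq_iff _ _ _ hl.symm] at hxy
    have hx' := V_sub g hg hx
    have hy' := V_sub g hg hy
    obtain ⟨σ', u, hu, rfl⟩ := hx
    obtain ⟨τ', v, hv, rfl⟩ := hy
    rcases good_amt g hg σ τ hl.symm with h | h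
    · rcases h with h | h | h | ⟨f, h⟩
      · linarith [hx'.2, hy'.1]
      · simp [h]
      · simp [h]
      · rw [h] at hxy
        exact absurd hxy (V_disj g hg σ' τ' f u v hu hv)
    · rcases h with h | h | h | ⟨f, h⟩
      · linarith [hx'.1, hy'.2]
      · simp [neg_eq_zero.mp h]
      · simp [neg_eq_iff_eq_neg.mp h]
      · exact absurd (by linarith) (V_disj g hg τ' σ' f v u hv hu)

theorem not_osc (a : ℝ) : ¬ OSC2 a := by
  rintro ⟨W, ⟨x, hx⟩, -, hW, hd⟩
  have h1 : S2 a 0 (S2 a 4 x) ∈ S2 a 0 '' W := ⟨_, hW 4 ⟨x, hx, rfl⟩, rfl⟩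
  have h2 : S2 a 1 (S2 a 2 x) ∈ S2 a 1 '' W := ⟨_, hW 2 ⟨x, hx, rfl⟩, rfl⟩
  have h3 : S2 a 0 (S2 a 4 x) = S2 a 1 (S2 a 2 x) := by
    simp [S2]; ring
  have h4 : S2 a 0 (S2 a 4 x) ∈ S2 a 0 '' W ∩ S2 a 1 '' W := ⟨h1, h3 ▸ h2⟩
  rw [hd 0 1 (by decide)] at h4
  exact h4

theorem not_oscco (a : ℝ) : ¬ OSCco2 a := fun h =>
  not_osc a ⟨Ioo 0 1, ⟨1 / 2, by norm_num, by norm_num⟩, isOpen_Ioo, h.1, h.2⟩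

theorem reach (g : ℕ → Bool) (m : ℕ) : ∃ σ τ : List (Fin 5), τ.length = σ.length ∧
    amt2 (B g / 16) σ τ = X (sh^[m] g) := by
  induction m with
  | zero =>
    refine ⟨[] ++ [0] ++ [3], [] ++ [1] ++ [0], rfl, ?_⟩
    rw [amt_append _ _ _ (by simp), amt_append _ _ _ (by simp)]
    simp [amt2, D, B]
    ring
  | succ m ih =>
    obtain ⟨σ, τ, hl, h⟩ := ih
    rw [Function.iterate_succ_apply']
    have h5 := X_succ (sh^[m] g)
    cases h0 : (sh^[m] g) 0 <;> simp only [h0, cond_true, cond_false] at h5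
    · refine ⟨σ ++ [4], τ ++ [3], by simp [hl], ?_⟩
      rw [amt_append _ _ _ hl.symm, h]
      simp [D]; linarith
    · refine ⟨σ ++ [4], τ ++ [0], by simp [hl], ?_⟩
      rw [amt_append _ _ _ hl.symm, h]
      simp [D] <;> linarith

theorem Ntype_finite (a : ℝ) (W : Set ℝ) (σ : List (Fin 5)) : (Ntype2 a W σ).Finite := by
  refine ((List.finite_length_eq (Fin 5) σ.length).image (amt2 a σ)).subset ?_
  rintro t ⟨τ, h, -, rfl⟩
  exact ⟨τ, h, rfl⟩

theorem not_ftcco (g : ℕ → Bool) (hi : Irrational (X g)) : ¬ FTCco2 (B g / 16) := by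
  intro h
  have h1 : (⋃₀ (Set.range (Ntype2 (B g / 16) (Ioo 0 1)))).Finite := by
    refine h.sUnion ?_
    rintro _ ⟨σ, rfl⟩
    exact Ntype_finite _ _ _
  have hinj : Function.Injective (fun m => X (sh^[m] g)) := by
    intro m n he
    by_contra hne
    rcases lt_or_gt_of_ne hne with h | h
    · exact X_iter_ne g hi h he
    · exact X_iter_ne g hi h he.symm
  refine Set.infinite_range_of_injective hinj (h1.subset ?_)
  rintro _ ⟨m, rfl⟩
  obtain ⟨σ, τ, hl, ha⟩ := reach g m
  have hlt := X_iter_lt g hi m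
  have hge := X_ge (sh^[m] g)
  refine ⟨_, ⟨σ, rfl⟩, τ, hl, ?_, ha.symm⟩
  refine ⟨Sw2 (B g / 16) σ ((1 + X (sh^[m] g)) / 2), ⟨_, ⟨by linarith, by linarith⟩, rfl⟩,
    ⟨(1 - X (sh^[m] g)) / 2, ⟨by linarith, by linarith⟩, ?_⟩⟩
  symm
  rw [Sw2_eq_iff _ _ _ hl.symm, ha]
  ring

end Stmt11Aux

open Stmt11Aux in
theorem stmt11 : ∃ a ∈ Ioo (0 : ℝ) (1 / 16),
    WSP2 a ∧ FTC2 a ∧ ¬ OSC2 a ∧ ¬ OSCco2 a ∧ ¬ FTCco2 a := by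
  obtain ⟨g, hg, hi⟩ := exists_g
  have h1 := X_ge g
  have h2 := X_le g
  refine ⟨B g / 16, ⟨?_, ?_⟩, wsp g hg, ftc g hg, not_osc _, not_oscco _, not_ftcco g hi⟩
  · unfold B; linarith
  · unfold B; linarith
end

section
/- There exists a real number a ∈ (0, 1/16) such that the iterated function system 𝒮₂(a) = {x/16, x/16 + a, x/16 + 15/16 − 16a, x/16 + 11/16, x/16 + 15/16} satisfies the weak separation property, and there exists a nonempty open set V ⊆ ℝ with S_i(V) ⊆ V for all i such that the collection of neighbourhood types relative to V is exactly the three sets {0}, {0, 16a}, and {0, −16a}. -/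
open Set

/-- Integer digits: `S_i(0) = E i / 192` for `a = 1/192`. -/
def digitE : Fin 5 → ℤ := ![0, 1, 164, 132, 180]

/-- `16^k * S_σ(0) = codeC σ / 12`. -/
def codeC (σ : List (Fin 5)) : ℤ := σ.foldl (fun acc i => 16 * acc + digitE i) 0

lemma codeC_append (σ : List (Fin 5)) (i : Fin 5) :
    codeC (σ ++ [i]) = 16 * codeC σ + digitE i := by
  simp [codeC]

lemma S2_eq (i : Fin 5) (x : ℝ) : S2 (1 / 192) i x = x / 16 + (digitE i : ℝ) / 192 := by
  fin_cases i <;> simp [S2, digitE] <;> ring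

lemma Sw2_append (a : ℝ) (σ τ : List (Fin 5)) (x : ℝ) :
    Sw2 a (σ ++ τ) x = Sw2 a σ (Sw2 a τ x) := by
  induction σ with
  | nil => simp [Sw2]
  | cons i σ ih => simp [Sw2, ih]

lemma Sw2_eq (σ : List (Fin 5)) (x : ℝ) :
    Sw2 (1 / 192) σ x = (x + (codeC σ : ℝ) / 12) / 16 ^ σ.length := by
  induction σ using List.reverseRecOn generalizing x with
  | nil => simp [Sw2, codeC]
  | append_singleton σ i ih =>
    rw [Sw2_append, ih, codeC_append]
    simp only [Sw2, Function.comp, id, S2_eq, List.length_append, List.length_singleton, pow_succ]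
    push_cast
    field_simp
    ring

lemma amt2_eq (σ τ : List (Fin 5)) (h : σ.length = τ.length) :
    amt2 (1 / 192) σ τ = ((codeC τ - codeC σ : ℤ) : ℝ) / 12 := by
  rw [amt2, Sw2_eq, Sw2_eq, ← h]
  push_cast
  field_simp
  ring

lemma inter_iff (σ τ : List (Fin 5)) (h : τ.length = σ.length) :
    (Sw2 (1 / 192) σ '' Ioo 0 1 ∩ Sw2 (1 / 192) τ '' Ioo 0 1).Nonempty ↔
      |codeC τ - codeC σ| < 12 := by
  have hp : (0 : ℝ) < 16 ^ σ.length := by positivity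
  constructor
  · rintro ⟨_, ⟨x, hx, rfl⟩, ⟨y, hy, hxy⟩⟩
    rw [Sw2_eq, Sw2_eq, h, div_left_inj' hp.ne'] at hxy
    obtain ⟨hx0, hx1⟩ := hx
    obtain ⟨hy0, hy1⟩ := hy
    rw [abs_lt]
    constructor
    · have : (-12 : ℝ) < (codeC τ : ℝ) - codeC σ := by linarith
      exact_mod_cast this
    · have : (codeC τ : ℝ) - codeC σ < 12 := by linarith
      exact_mod_cast this
  · intro hlt
    rw [abs_lt] at hlt
    have h1 : (-12 : ℝ) < (codeC τ : ℝ) - codeC σ := by exact_mod_cast hlt.1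
    have h2 : (codeC τ : ℝ) - codeC σ < 12 := by exact_mod_cast hlt.2
    refine ⟨Sw2 (1 / 192) σ (1 / 2 + ((codeC τ : ℝ) - codeC σ) / 24), ⟨_, ⟨?_, ?_⟩, rfl⟩,
      ⟨1 / 2 - ((codeC τ : ℝ) - codeC σ) / 24, ⟨?_, ?_⟩, ?_⟩⟩
    · linarith
    · linarith
    · linarith
    · linarith
    · rw [Sw2_eq, Sw2_eq, h]
      congr 1
      ring

lemma step_fact (d : ℤ) (hd : d = 0 ∨ d = 1 ∨ d = -1) (i j : Fin 5)
    (h : |16 * d + (digitE j - digitE i)| < 12) :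
    16 * d + (digitE j - digitE i) = 0 ∨
    (16 * d + (digitE j - digitE i) = 1 ∧ i = 0) ∨
    (16 * d + (digitE j - digitE i) = -1 ∧ i = 1) := by
  rcases hd with rfl | rfl | rfl <;> revert i j <;> decide

lemma key (σ τ : List (Fin 5)) (h : τ.length = σ.length) (hlt : |codeC τ - codeC σ| < 12) :
    codeC τ - codeC σ = 0 ∨ (codeC τ - codeC σ = 1 ∧ σ.getLast? = some 0) ∨
      (codeC τ - codeC σ = -1 ∧ σ.getLast? = some 1) := by
  induction σ using List.reverseRecOn generalizing τ with
  | nil =>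
    have : τ = [] := by simpa using h
    subst this
    simp
  | append_singleton σ i ih =>
    rcases List.eq_nil_or_concat τ with rfl | ⟨τ', j, rfl⟩
    · simp at h
    · simp only [List.concat_eq_append, List.length_append, List.length_singleton] at h hlt ⊢
      rw [codeC_append, codeC_append] at *
      have e : 16 * codeC τ' + digitE j - (16 * codeC σ + digitE i) =
        16 * (codeC τ' - codeC σ) + (digitE j - digitE i) := by ring
      rw [e] at hlt ⊢
      have hE : ∀ i, 0 ≤ digitE i ∧ digitE i ≤ 180 := by decide
      have hi := hE i
      have hj := hE j
      have hd : |codeC τ' - codeC σ| < 12 := by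
        rw [abs_lt] at *
        omega
      have := ih τ' (by omega) hd
      have := step_fact (codeC τ' - codeC σ) (by tauto) i j hlt
      simpa using this

lemma mem_Ntype_s12 (σ : List (Fin 5)) (t : ℝ) :
    t ∈ Ntype2 (1 / 192) (Ioo 0 1) σ ↔ ∃ τ : List (Fin 5), τ.length = σ.length ∧
      |codeC τ - codeC σ| < 12 ∧ t = ((codeC τ - codeC σ : ℤ) : ℝ) / 12 := by
  simp only [Ntype2, mem_setOf_eq]
  refine exists_congr fun τ => and_congr_right fun h => ?_
  rw [inter_iff σ τ h, amt2_eq σ τ h.symm]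

lemma zero_mem_Ntype (σ : List (Fin 5)) : (0 : ℝ) ∈ Ntype2 (1 / 192) (Ioo 0 1) σ :=
  (mem_Ntype_s12 σ 0).2 ⟨σ, rfl, by simp, by simp⟩

lemma Ntype_sub (σ : List (Fin 5)) (t : ℝ) (ht : t ∈ Ntype2 (1 / 192) (Ioo 0 1) σ) :
    t = 0 ∨ (t = 1 / 12 ∧ σ.getLast? = some 0) ∨ (t = -(1 / 12) ∧ σ.getLast? = some 1) := by
  obtain ⟨τ, hl, hlt, rfl⟩ := (mem_Ntype_s12 σ t).1 ht
  rcases key σ τ hl hlt with h | ⟨h, h'⟩ | ⟨h, h'⟩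
  · left; rw [h]; simp
  · right; left; rw [h]; exact ⟨by norm_num, h'⟩
  · right; right; rw [h]; exact ⟨by norm_num, h'⟩

theorem stmt12 : ∃ a ∈ Ioo (0 : ℝ) (1 / 16),
    WSP2 a ∧
    ∃ V : Set ℝ, V.Nonempty ∧ IsOpen V ∧ (∀ i, S2 a i '' V ⊆ V) ∧
      Set.range (Ntype2 a V) =
        {({0} : Set ℝ), {0, 16 * a}, {0, -(16 * a)}} := by
  refine ⟨1 / 192, ⟨by norm_num, by norm_num⟩, ⟨1 / 12, by norm_num, ?_⟩,
    Ioo 0 1, ⟨1 / 2, by norm_num, by norm_num⟩, isOpen_Ioo, ?_, ?_⟩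
  · intro σ τ h hne
    rw [amt2_eq σ τ h] at hne ⊢
    have hz : codeC τ - codeC σ ≠ 0 := by
      intro h0
      rw [h0] at hne
      simp at hne
    have h1 : (1 : ℝ) ≤ |((codeC τ - codeC σ : ℤ) : ℝ)| := by
      exact_mod_cast Int.one_le_abs hz
    rw [abs_div, abs_of_pos (by norm_num : (0 : ℝ) < 12)]
    linarith
  · rintro i _ ⟨x, ⟨h0, h1⟩, rfl⟩
    rw [S2_eq]
    have hE : ∀ i, 0 ≤ digitE i ∧ digitE i ≤ 180 := by decide
    have e0 : (0 : ℝ) ≤ digitE i := by exact_mod_cast (hE i).1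
    have e1 : (digitE i : ℝ) ≤ 180 := by exact_mod_cast (hE i).2
    constructor <;> linarith
  · have e16 : (16 : ℝ) * (1 / 192) = 1 / 12 := by norm_num
    rw [e16]
    apply Subset.antisymm
    · rintro _ ⟨σ, rfl⟩
      have hs := Ntype_sub σ
      have h0 := zero_mem_Ntype σ
      by_cases hp : (1 / 12 : ℝ) ∈ Ntype2 (1 / 192) (Ioo 0 1) σ
      · right; left
        have hl : σ.getLast? = some 0 := by
          rcases hs _ hp with h | ⟨_, h⟩ | ⟨h, _⟩
          · norm_num at h
          · exact h
          · norm_num at h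
        ext t
        simp only [mem_insert_iff, mem_singleton_iff]
        constructor
        · intro ht
          rcases hs t ht with h | ⟨h, _⟩ | ⟨_, h⟩
          · exact Or.inl h
          · exact Or.inr h
          · rw [hl] at h; simp at h
        · rintro (rfl | rfl) <;> assumption
      · by_cases hn : (-(1 / 12) : ℝ) ∈ Ntype2 (1 / 192) (Ioo 0 1) σ
        · right; right
          ext t
          simp only [mem_insert_iff, mem_singleton_iff]
          constructor
          · intro ht
            rcases hs t ht with h | ⟨h, _⟩ | ⟨h, _⟩
            · exact Or.inl h
            · exact absurd (h ▸ ht) hp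
            · exact Or.inr h
          · rintro (rfl | rfl) <;> assumption
        · left
          ext t
          simp only [mem_singleton_iff]
          constructor
          · intro ht
            rcases hs t ht with h | ⟨h, _⟩ | ⟨h, _⟩
            · exact h
            · exact absurd (h ▸ ht) hp
            · exact absurd (h ▸ ht) hn
          · rintro rfl; exact h0
    · rintro _ (rfl | rfl | rfl)
      · refine ⟨[], ?_⟩
        ext t
        simp only [mem_singleton_iff]
        constructor
        · intro ht
          rcases Ntype_sub _ t ht with h | ⟨_, h⟩ | ⟨_, h⟩
          · exact h
          · simp at h
          · simp at h
        · rintro rfl; exact zero_mem_Ntype _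
      · refine ⟨[0], ?_⟩
        ext t
        simp only [mem_insert_iff, mem_singleton_iff]
        constructor
        · intro ht
          rcases Ntype_sub _ t ht with h | ⟨h, _⟩ | ⟨_, h⟩
          · exact Or.inl h
          · exact Or.inr h
          · simp at h
        · rintro (rfl | rfl)
          · exact zero_mem_Ntype _
          · exact (mem_Ntype_s12 _ _).2 ⟨[1], rfl, by decide, by simp [codeC, digitE]⟩
      · refine ⟨[1], ?_⟩
        ext t
        simp only [mem_insert_iff, mem_singleton_iff]
        constructor
        · intro ht
          rcases Ntype_sub _ t ht with h | ⟨_, h⟩ | ⟨h, _⟩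
          · exact Or.inl h
          · simp at h
          · exact Or.inr h
        · rintro (rfl | rfl)
          · exact zero_mem_Ntype _
          · exact (mem_Ntype_s12 _ _).2 ⟨[0], rfl, by decide, by simp [codeC, digitE]; try norm_num⟩
end

section
/- For every real number a ∈ (0, 15/256], the attractor K of the iterated function system 𝒮₂(a) = {x/16, x/16 + a, x/16 + 15/16 − 16a, x/16 + 11/16, x/16 + 15/16} satisfies {0, 1} ⊆ K ⊆ [0, 1] and K ≠ [0, 1]. -/
open Set

theorem stmt13 : ∀ a ∈ Ioc (0 : ℝ) (15 / 256),
    ∀ K : Set ℝ, K.Nonempty → IsCompact K → K = ⋃ i, S2 a i '' K →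
      ({0, 1} : Set ℝ) ⊆ K ∧ K ⊆ Icc 0 1 ∧ K ≠ Icc 0 1 := by
  intro a ha K hne hc hK
  obtain ⟨ha0, ha1⟩ := ha
  have hback : ∀ x ∈ K, ∃ y ∈ K, x = y / 16 ∨ x = y / 16 + a ∨ x = y / 16 + 15 / 16 - 16 * a ∨
      x = y / 16 + 11 / 16 ∨ x = y / 16 + 15 / 16 := by
    intro x hx
    rw [hK] at hx
    obtain ⟨i, y, hy, h⟩ := mem_iUnion.1 hx
    refine ⟨y, hy, ?_⟩
    subst h
    fin_cases i <;> simp [S2]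
  have h0 : ∀ x ∈ K, x / 16 ∈ K := by
    intro x hx
    rw [hK]
    exact mem_iUnion.2 ⟨0, x, hx, by simp [S2]⟩
  have h4 : ∀ x ∈ K, x / 16 + 15 / 16 ∈ K := by
    intro x hx
    rw [hK]
    exact mem_iUnion.2 ⟨4, x, hx, by simp [S2]⟩
  obtain ⟨m, hm, hmin⟩ := hc.exists_isLeast hne
  obtain ⟨M, hM, hmax⟩ := hc.exists_isGreatest hne
  have em : m = 0 := by
    apply le_antisymm
    · have := hmin (h0 m hm)
      linarith
    · obtain ⟨y, hy, h⟩ := hback m hm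
      have := hmin hy
      rcases h with h | h | h | h | h <;> linarith
  have eM : M = 1 := by
    apply le_antisymm
    · obtain ⟨y, hy, h⟩ := hback M hM
      have := hmax hy
      rcases h with h | h | h | h | h <;> linarith
    · have := hmax (h4 M hM)
      linarith
  subst em eM
  have hsub : K ⊆ Icc 0 1 := fun x hx => ⟨hmin hx, hmax hx⟩
  refine ⟨?_, hsub, ?_⟩
  · rintro x (rfl | rfl)
    · exact hm
    · exact hM
  · intro hE
    have hq : (1 / 4 : ℝ) ∈ K := by rw [hE]; constructor <;> norm_num
    have hh : (1 / 2 : ℝ) ∈ K := by rw [hE]; constructor <;> norm_num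
    obtain ⟨y, hy, h⟩ := hback _ hq
    obtain ⟨z, hz, h'⟩ := hback _ hh
    obtain ⟨hy0, hy1⟩ := hsub hy
    obtain ⟨hz0, hz1⟩ := hsub hz
    rcases h with h | h | h | h | h <;> rcases h' with h' | h' | h' | h' | h' <;> linarith
end

section
/- Let 0 < r < 1 and let S_i(x) = r x + d_i, i = 1, …, n, be an equicontractive iterated function system on ℝ whose attractor is the interval [0, 1]. Then the IFS satisfies the weak separation property if and only if there exists c > 0 such that for every k ≥ 0, all words σ, τ of length k over {1,…,n}, and all z, w ∈ {0, 1}, either S_σ(z) = S_τ(w) or |S_σ(z) − S_τ(w)| > c r^k. -/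
open Set

section helpers

theorem compW_eq {n : ℕ} {r : ℝ} {d : Fin n → ℝ} {S : Fin n → ℝ → ℝ}
    (hS : ∀ i x, S i x = r * x + d i) (σ : List (Fin n)) (x : ℝ) :
    compW S σ x = compW S σ 0 + r ^ σ.length * x := by
  induction σ with
  | nil => simp [compW]
  | cons i σ ih =>
    simp only [compW, Function.comp, hS, List.length_cons]
    rw [ih]; ring

theorem compW_append {n : ℕ} {r : ℝ} {d : Fin n → ℝ} {S : Fin n → ℝ → ℝ}
    (hS : ∀ i x, S i x = r * x + d i) (σ τ : List (Fin n)) :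
    compW S (σ ++ τ) 0 = compW S σ 0 + r ^ σ.length * compW S τ 0 := by
  rw [← compW_eq hS]
  induction σ with
  | nil => simp [compW]
  | cons i σ ih => simp only [List.cons_append, compW, Function.comp, ih]

/-- The set of normalized differences at level k. -/
def diffs {n : ℕ} (r : ℝ) (S : Fin n → ℝ → ℝ) (k : ℕ) : Set ℝ :=
  {a | ∃ σ τ : List (Fin n), σ.length = k ∧ τ.length = k ∧
    compW S σ 0 - compW S τ 0 = r ^ k * a}

/-- The neighbours of a word. -/
def nbrs {n : ℕ} (r : ℝ) (S : Fin n → ℝ → ℝ) (σ : List (Fin n)) : Set ℝ :=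
  {a | |a| ≤ 1 ∧ ∃ τ : List (Fin n), τ.length = σ.length ∧
    compW S σ 0 - compW S τ 0 = r ^ σ.length * a}

theorem diffs_neg {n : ℕ} {r : ℝ} {S : Fin n → ℝ → ℝ} {k : ℕ} {a : ℝ}
    (h : a ∈ diffs r S k) : -a ∈ diffs r S k := by
  obtain ⟨σ, τ, h1, h2, h3⟩ := h
  exact ⟨τ, σ, h2, h1, by linarith⟩

theorem finite_gap {G : Set ℝ} (hG : G.Finite) (c : ℝ) :
    ∃ δ > 0, ∀ a ∈ G, a ≠ c → δ ≤ |a - c| := by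
  induction G, hG using Set.Finite.induction_on with
  | empty => exact ⟨1, one_pos, by simp⟩
  | @insert b s _ _ ih =>
    obtain ⟨δ, hδ, h⟩ := ih
    by_cases hb : b = c
    · refine ⟨δ, hδ, ?_⟩
      rintro a (rfl | ha) hac
      · exact absurd hb hac
      · exact h a ha hac
    · refine ⟨min δ |b - c|, lt_min hδ (abs_pos.2 (sub_ne_zero.2 hb)), ?_⟩
      rintro a (rfl | ha) hac
      · exact min_le_right _ _
      · exact (min_le_left _ _).trans (h a ha hac)

variable {n : ℕ} {r : ℝ} {d : Fin n → ℝ} {S : Fin n → ℝ → ℝ}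

theorem digit_mem (hS : ∀ i x, S i x = r * x + d i)
    (hattr : Icc (0 : ℝ) 1 = ⋃ i, S i '' Icc 0 1) (i : Fin n) {x : ℝ}
    (hx : x ∈ Icc (0 : ℝ) 1) : r * x + d i ∈ Icc (0 : ℝ) 1 := by
  rw [hattr, ← hS]
  exact mem_iUnion.2 ⟨i, x, hx, rfl⟩

theorem cover (hS : ∀ i x, S i x = r * x + d i)
    (hattr : Icc (0 : ℝ) 1 = ⋃ i, S i '' Icc 0 1) (p : ℕ) {x : ℝ}
    (hx : x ∈ Icc (0 : ℝ) 1) : ∃ ω : List (Fin n), ω.length = p ∧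
      ∃ y ∈ Icc (0 : ℝ) 1, x = compW S ω 0 + r ^ p * y := by
  induction p generalizing x with
  | zero => exact ⟨[], rfl, x, hx, by simp [compW]⟩
  | succ p ih =>
    have hx' := hx
    rw [hattr] at hx'
    obtain ⟨i, y, hy, rfl⟩ := mem_iUnion.1 hx'
    obtain ⟨ω, hω, z, hz, rfl⟩ := ih hy
    refine ⟨i :: ω, by simp [hω], z, hz, ?_⟩
    simp only [compW, Function.comp, hS]; ring

theorem compW_mem (hS : ∀ i x, S i x = r * x + d i)
    (hattr : Icc (0 : ℝ) 1 = ⋃ i, S i '' Icc 0 1) (σ : List (Fin n)) {x : ℝ}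
    (hx : x ∈ Icc (0 : ℝ) 1) : compW S σ x ∈ Icc (0 : ℝ) 1 := by
  induction σ with
  | nil => simpa [compW] using hx
  | cons i σ ih =>
    simp only [compW, Function.comp, hS]
    exact digit_mem hS hattr i ih

theorem nbrs_card {ε : ℝ} (hε : 0 < ε) (hr0 : 0 < r)
    (hw : ∀ k, ∀ a ∈ diffs r S k, a ≠ 0 → ε ≤ |a|) (σ : List (Fin n)) :
    (nbrs r S σ).Finite ∧
      (nbrs r S σ).ncard ≤ (Icc ⌊-1 / ε⌋ ⌊1 / ε⌋).ncard := by
  have hinj : InjOn (fun a : ℝ => ⌊a / ε⌋) (nbrs r S σ) := by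
    rintro a ⟨_, τ, h1, h2⟩ b ⟨_, τ', h1', h2'⟩ hab
    by_contra hne
    have h3 := hw σ.length (a - b) ⟨τ', τ, h1', h1, by linarith⟩ (sub_ne_zero.2 hne)
    have h4 := Int.abs_sub_lt_one_of_floor_eq_floor hab
    rw [← sub_div, abs_div, abs_of_pos hε, div_lt_one hε] at h4
    linarith
  have hmaps : MapsTo (fun a : ℝ => ⌊a / ε⌋) (nbrs r S σ) (Icc ⌊-1 / ε⌋ ⌊1 / ε⌋) := by
    rintro a ⟨ha, _⟩
    rw [abs_le] at ha
    constructor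
    · exact Int.floor_le_floor (by gcongr; exact ha.1)
    · exact Int.floor_le_floor (by gcongr; exact ha.2)
  have hf : (Icc ⌊-1 / ε⌋ ⌊1 / ε⌋).Finite := finite_Icc _ _
  exact ⟨Finite.of_injOn hmaps hinj hf, ncard_le_ncard_of_injOn _ hmaps hinj hf⟩

theorem nbrs_subset (hS : ∀ i x, S i x = r * x + d i) (ω σ : List (Fin n)) :
    nbrs r S σ ⊆ nbrs r S (ω ++ σ) := by
  rintro a ⟨ha, τ, h1, h2⟩
  refine ⟨ha, ω ++ τ, by simp [h1], ?_⟩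
  rw [compW_append hS, compW_append hS, List.length_append, pow_add, mul_assoc, ← h2]
  ring

theorem exists_max_word {ε : ℝ} (hε : 0 < ε) (hr0 : 0 < r)
    (hS : ∀ i x, S i x = r * x + d i)
    (hw : ∀ k, ∀ a ∈ diffs r S k, a ≠ 0 → ε ≤ |a|) :
    ∃ σ : List (Fin n), ∀ ω : List (Fin n), nbrs r S (ω ++ σ) = nbrs r S σ := by
  set B := (Icc ⌊-1 / ε⌋ ⌊1 / ε⌋).ncard with hB
  let f : List (Fin n) → ℕ := fun σ => B - (nbrs r S σ).ncard
  refine ⟨Function.argmin f, fun ω => ?_⟩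
  have h := Function.argmin_le f (ω ++ Function.argmin f)
  set σ := Function.argmin f
  have h1 := (nbrs_card hε hr0 hw σ).2
  have h2 := (nbrs_card hε hr0 hw (ω ++ σ)).2
  simp only [f] at h
  exact (eq_of_subset_of_ncard_le (nbrs_subset hS ω σ) (by omega)
    (nbrs_card hε hr0 hw (ω ++ σ)).1).symm

theorem zero_digit (hr0 : 0 < r) (hS : ∀ i x, S i x = r * x + d i)
    (hattr : Icc (0 : ℝ) 1 = ⋃ i, S i '' Icc 0 1) : ∃ i, d i = 0 := by
  obtain ⟨ω, h1, y, hy, h⟩ := cover hS hattr 1 (x := 0) (by simp)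
  obtain ⟨i, rfl⟩ := List.length_eq_one_iff.1 h1
  have h2 := (digit_mem hS hattr i (x := 0) (by simp)).1
  simp [compW, hS] at h h2
  exact ⟨i, by nlinarith [hy.1, mul_nonneg hr0.le hy.1]⟩

theorem finite_inner {ε : ℝ} (hε : 0 < ε) (hr0 : 0 < r) (hr1 : r < 1)
    (hS : ∀ i x, S i x = r * x + d i)
    (hattr : Icc (0 : ℝ) 1 = ⋃ i, S i '' Icc 0 1)
    (hw : ∀ k, ∀ a ∈ diffs r S k, a ≠ 0 → ε ≤ |a|) {η : ℝ} (hη : 0 < η) :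
    {a | (∃ k, a ∈ diffs r S k) ∧ |a| ≤ 1 - η}.Finite := by
  obtain ⟨i0, hi0⟩ := zero_digit hr0 hS hattr
  obtain ⟨σ0, hσ0⟩ := exists_max_word hε hr0 hS hw
  obtain ⟨q, hq⟩ := exists_pow_lt_of_lt_one hη hr1
  have hrep : ∀ q : ℕ, compW S (List.replicate q i0) 0 = 0 := by
    intro q
    induction q with
    | zero => simp [compW]
    | succ q ih => simp [List.replicate_succ, compW, hS, ih, hi0]
  set σ1 := List.replicate q i0 ++ σ0 with hσ1
  have hmem0 := compW_mem hS hattr σ0 (x := 0) (by simp)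
  have ht1 : compW S σ1 0 = r ^ q * compW S σ0 0 := by
    rw [hσ1, compW_append hS, hrep]; simp
  have hs0 : 0 ≤ compW S σ1 0 := by
    rw [ht1]; exact mul_nonneg (by positivity) hmem0.1
  have hs1 : compW S σ1 0 ≤ η := by
    rw [ht1]
    have : r ^ q * compW S σ0 0 ≤ r ^ q * 1 := by gcongr; exact hmem0.2
    linarith
  set p := σ1.length with hp
  have hfin : (nbrs r S σ0).Finite := (nbrs_card hε hr0 hw σ0).1
  have hfw : {ω : List (Fin n) | ω.length = p}.Finite := List.finite_length_eq _ _
  set H : Set ℝ := image2 (fun b ω => r ^ p * b - compW S σ1 0 + compW S ω 0) (nbrs r S σ0)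
    {ω : List (Fin n) | ω.length = p} with hH
  have hHf : H.Finite := hfin.image2 _ hfw
  have key : ∀ a, 0 ≤ a → (∃ k, a ∈ diffs r S k) → a ≤ 1 - η → a ∈ H := by
    rintro a ha ⟨k, σ, τ, hk1, hk2, h⟩ ha1
    obtain ⟨ω, hω, b, hb, hab⟩ := cover hS hattr p (x := a + compW S σ1 0)
      ⟨by linarith, by linarith⟩
    refine ⟨b, ?_, ω, hω, by simp only; linarith⟩
    rw [← hσ0 (σ ++ List.replicate q i0), List.append_assoc, ← hσ1]
    refine ⟨abs_le.2 ⟨by linarith [hb.1], hb.2⟩, τ ++ ω, by simp [hk1, hk2, hω, hp], ?_⟩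
    rw [compW_append hS σ σ1, compW_append hS τ ω, List.length_append, hk1, hk2, ← hp, pow_add]
    have : r ^ k * (a + compW S σ1 0) = r ^ k * (compW S ω 0 + r ^ p * b) := by rw [hab]
    linarith
  refine (hHf.union (hHf.image (fun a => -a))).subset ?_
  rintro a ⟨⟨k, hk⟩, ha⟩
  rcases le_total 0 a with h | h
  · exact Or.inl (key a h ⟨k, hk⟩ ((le_abs_self a).trans ha))
  · exact Or.inr ⟨-a, key (-a) (by linarith) ⟨k, diffs_neg hk⟩ ((neg_le_abs a).trans ha), by simp⟩

theorem diffs_parent (hr0 : 0 < r) (hS : ∀ i x, S i x = r * x + d i) {k : ℕ} {a : ℝ}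
    (h : a ∈ diffs r S (k + 1)) : ∃ i j, r * a + d j - d i ∈ diffs r S k := by
  obtain ⟨σ, τ, h1, h2, h3⟩ := h
  rcases List.eq_nil_or_concat' σ with rfl | ⟨σ', i, rfl⟩
  · simp at h1
  rcases List.eq_nil_or_concat' τ with rfl | ⟨τ', j, rfl⟩
  · simp at h2
  have h1' : σ'.length = k := by simpa using h1
  have h2' : τ'.length = k := by simpa using h2
  refine ⟨i, j, σ', τ', h1', h2', ?_⟩
  rw [compW_append hS, compW_append hS, h1', h2'] at h3
  simp only [compW, Function.comp, hS, id] at h3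
  rw [pow_succ] at h3
  linarith

theorem overlap_bound {ε : ℝ} (hε : 0 < ε) (hr0 : 0 < r) (hr1 : r < 1)
    (hS : ∀ i x, S i x = r * x + d i)
    (hattr : Icc (0 : ℝ) 1 = ⋃ i, S i '' Icc 0 1)
    (hw : ∀ k, ∀ a ∈ diffs r S k, a ≠ 0 → ε ≤ |a|) :
    ∃ δ > 0, ∀ k, ∀ a ∈ diffs r S k, a < 1 → a ≤ 1 - δ := by
  have hd0 : ∀ i, 0 ≤ d i := fun i => by
    simpa using (digit_mem hS hattr i (x := 0) (by simp)).1
  have hd1 : ∀ i, d i ≤ 1 - r := fun i => by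
    have := (digit_mem hS hattr i (x := 1) (by simp)).2
    linarith
  obtain ⟨c0, hc0, hc⟩ := finite_gap
    (finite_range (fun q : Fin n × Fin n => 1 - r - d q.2 + d q.1)) 0
  have hη : 0 < min ((1 - r) * 0 + c0) r := by simp [hc0, hr0]
  have hη' : 0 < min c0 r := lt_min hc0 hr0
  have hF := finite_inner hε hr0 hr1 hS hattr hw hη'
  set F := {a | (∃ k, a ∈ diffs r S k) ∧ |a| ≤ 1 - min c0 r} with hFd
  have hG : (image2 (fun a' (q : Fin n × Fin n) => (a' - d q.2 + d q.1) / r) F univ).Finite :=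
    hF.image2 _ finite_univ
  obtain ⟨δ1, hδ1, hδ⟩ := finite_gap hG 1
  refine ⟨min 1 δ1, lt_min one_pos hδ1, fun k => ?_⟩
  induction k with
  | zero =>
    rintro a ⟨σ, τ, h1, h2, h3⟩ _
    rw [List.length_eq_zero_iff.1 h1, List.length_eq_zero_iff.1 h2] at h3
    simp at h3
    rw [← h3]
    linarith [min_le_left 1 δ1]
  | succ k ih =>
    intro a ha ha1
    rcases lt_or_ge a 0 with hneg | hpos
    · linarith [min_le_left 1 δ1]
    obtain ⟨i, j, hp⟩ := diffs_parent hr0 hS ha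
    by_cases hz : 1 - r - d j + d i = 0
    · have h1 : r * a < r * 1 := by gcongr
      have h2 := ih _ hp (by linarith)
      have h3 : r * (1 - a) ≥ min 1 δ1 := by linarith
      nlinarith
    · have h1 := hc _ ⟨(i, j), rfl⟩ hz
      simp only [sub_zero] at h1
      rw [abs_of_nonneg (by linarith [hd1 j, hd0 i])] at h1
      have h2 : r * a ≤ r * 1 := by gcongr
      have h3 : 0 ≤ r * a := by positivity
      have hmem : r * a + d j - d i ∈ F := by
        refine ⟨⟨k, hp⟩, abs_le.2 ⟨?_, ?_⟩⟩
        · linarith [min_le_right c0 r, hd0 j, hd1 i]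
        · linarith [min_le_left c0 r]
      have h4 := hδ a ⟨_, hmem, (i, j), trivial, by simp only; field_simp; ring⟩ ha1.ne
      rw [abs_of_neg (by linarith)] at h4
      linarith [min_le_right 1 δ1]

theorem gap_bound {ε : ℝ} (hε : 0 < ε) (hr0 : 0 < r) (hr1 : r < 1)
    (hS : ∀ i x, S i x = r * x + d i)
    (hattr : Icc (0 : ℝ) 1 = ⋃ i, S i '' Icc 0 1)
    (hw : ∀ k, ∀ a ∈ diffs r S k, a ≠ 0 → ε ≤ |a|) :
    ∃ δ > 0, ∀ k, ∀ a ∈ diffs r S k, 1 < a → 1 + δ ≤ a := by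
  have hF := finite_inner hε hr0 hr1 hS hattr hw (half_pos hε)
  set F := {a | (∃ k, a ∈ diffs r S k) ∧ |a| ≤ 1 - ε / 2} with hFd
  obtain ⟨δ1, hδ1, hδ⟩ := finite_gap (hF.image2 (fun x y => x + y) hF) 1
  refine ⟨min (ε / 2) δ1, lt_min (half_pos hε) hδ1, ?_⟩
  intro k a ha ha1
  by_contra hcon
  push Not at hcon
  have hlt : a < 1 + ε / 2 := by linarith [min_le_left (ε / 2) δ1]
  obtain ⟨σ, τ, h1, h2, h3⟩ := id ha
  have hk : 0 < r ^ k := by positivity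
  have m1 := (compW_mem hS hattr τ (x := 0) (by simp)).1
  have m2 := (compW_mem hS hattr σ (x := 0) (by simp)).2
  have e1 : 0 < r ^ k * (1 + a) / 2 := by positivity
  have e2 : 0 < r ^ k * (a - 1) := mul_pos hk (by linarith)
  obtain ⟨ρ, hρ, u, hu, hm⟩ := cover hS hattr k (x := compW S τ 0 + r ^ k * (1 + a) / 2)
    ⟨by linarith, by linarith⟩
  have hb : (1 + a) / 2 - u ∈ diffs r S k := ⟨ρ, τ, hρ, h2, by linarith⟩
  have hc : (a - 1) / 2 + u ∈ diffs r S k := ⟨σ, ρ, h1, hρ, by linarith⟩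
  have pb : 0 < (1 + a) / 2 - u := by linarith [hu.2]
  have pc : 0 < (a - 1) / 2 + u := by linarith [hu.1]
  have wb := hw k _ hb pb.ne'
  have wc := hw k _ hc pc.ne'
  rw [abs_of_pos pb] at wb
  rw [abs_of_pos pc] at wc
  have fb : (1 + a) / 2 - u ∈ F := ⟨⟨k, hb⟩, by rw [abs_of_pos pb]; linarith⟩
  have fc : (a - 1) / 2 + u ∈ F := ⟨⟨k, hc⟩, by rw [abs_of_pos pc]; linarith⟩
  have h4 := hδ a ⟨_, fb, _, fc, by simp only; ring⟩ ha1.ne'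
  rw [abs_of_pos (by linarith)] at h4
  linarith [min_le_right (ε / 2) δ1]

end helpers

theorem stmt14 {n : ℕ} (r : ℝ) (hr0 : 0 < r) (hr1 : r < 1)
    (d : Fin n → ℝ) (S : Fin n → ℝ → ℝ) (hS : ∀ i x, S i x = r * x + d i)
    (hattr : Icc (0 : ℝ) 1 = ⋃ i, S i '' Icc 0 1) :
    (∃ ε > 0, ∀ σ τ : List (Fin n), σ.length = τ.length →
      (r ^ σ.length)⁻¹ * (compW S τ 0 - compW S σ 0) ≠ 0 →
      ε ≤ |(r ^ σ.length)⁻¹ * (compW S τ 0 - compW S σ 0)|) ↔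
    (∃ c > 0, ∀ σ τ : List (Fin n), σ.length = τ.length →
      ∀ z ∈ ({0, 1} : Set ℝ), ∀ w ∈ ({0, 1} : Set ℝ),
        compW S σ z = compW S τ w ∨
          c * r ^ σ.length < |compW S σ z - compW S τ w|) := by
  constructor
  · rintro ⟨ε, hε, h⟩
    have hw : ∀ k, ∀ a ∈ diffs r S k, a ≠ 0 → ε ≤ |a| := by
      rintro k a ⟨σ, τ, h1, h2, h3⟩ ha
      have hk : r ^ k ≠ 0 := by positivity
      have h4 := h τ σ (by rw [h1, h2])
      rw [h2, h3, inv_mul_cancel_left₀ hk] at h4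
      exact h4 ha
    obtain ⟨δ1, hδ1, ho⟩ := overlap_bound hε hr0 hr1 hS hattr hw
    obtain ⟨δ2, hδ2, hg⟩ := gap_bound hε hr0 hr1 hS hattr hw
    set m := min ε (min δ1 δ2) with hm
    have hmpos : 0 < m := lt_min hε (lt_min hδ1 hδ2)
    have m1 : m ≤ ε := min_le_left _ _
    have m2 : m ≤ δ1 := (min_le_right _ _).trans (min_le_left _ _)
    have m3 : m ≤ δ2 := (min_le_right _ _).trans (min_le_right _ _)
    have hone : ∀ k, ∀ a ∈ diffs r S k, a ≠ 1 → m ≤ |a - 1| := by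
      intro k a ha hne
      rcases lt_or_gt_of_ne hne with h1 | h1
      · rw [abs_of_neg (by linarith)]; linarith [ho k a ha h1]
      · rw [abs_of_pos (by linarith)]; linarith [hg k a ha h1]
    refine ⟨m / 2, half_pos hmpos, ?_⟩
    intro σ τ hl z hz w hw'
    have hk : 0 < r ^ σ.length := by positivity
    have hfin : ∀ b : ℝ, compW S σ z - compW S τ w = r ^ σ.length * b → (b ≠ 0 → m ≤ |b|) →
        compW S σ z = compW S τ w ∨ m / 2 * r ^ σ.length < |compW S σ z - compW S τ w| := by
      intro b hb hb'
      by_cases h0 : b = 0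
      · left; rw [h0] at hb; linarith
      · right
        rw [hb, abs_mul, abs_of_pos hk, mul_comm]
        exact mul_lt_mul_of_pos_left (by linarith [hb' h0]) hk
    obtain ⟨a, ha⟩ : ∃ a, compW S σ 0 - compW S τ 0 = r ^ σ.length * a :=
      ⟨(compW S σ 0 - compW S τ 0) / r ^ σ.length, by field_simp⟩
    have had : a ∈ diffs r S σ.length := ⟨σ, τ, rfl, hl.symm, ha⟩
    have hsub : compW S σ z - compW S τ w = r ^ σ.length * (a + z - w) := by
      rw [compW_eq hS σ z, compW_eq hS τ w, ← hl]; linarith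
    refine hfin _ hsub ?_
    rcases hz with rfl | rfl <;> rcases hw' with rfl | rfl
    · intro h0
      have := hw _ a had (by simpa using h0)
      simp only [add_zero, sub_zero]; linarith
    · intro h0
      have := hone _ a had (by intro h1; apply h0; rw [h1]; norm_num)
      simpa using this
    · intro h0
      have := hone _ (-a) (diffs_neg had) (by intro h1; apply h0; linarith)
      rw [← abs_neg] at this
      convert this using 2; ring
    · intro h0
      have := hw _ a had (by simpa using h0)
      rw [add_sub_cancel_right]; linarith
  · rintro ⟨c, hc, h⟩
    refine ⟨c, hc, fun σ τ hl hne => ?_⟩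
    have hk : 0 < r ^ σ.length := by positivity
    rcases h σ τ hl 0 (by simp) 0 (by simp) with h1 | h1
    · rw [h1] at hne; simp at hne
    · rw [abs_mul, abs_of_pos (inv_pos.2 hk), abs_sub_comm, inv_mul_eq_div, le_div_iff₀ hk]
      exact h1.le
end
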